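/- The rook partition monoid RP_n has monoid presentation ⟨S ∪ {e,q,o} | (R44)–(R59)⟩ via ξ; that is, the monoid homomorphism ξ : (S∪{e,q,o})* → RP_n is surjective and its kernel congruence equals the congruence generated by the relations (R44)–(R59). -/

import Mathlib

/-!
Strategy. Attach all rook dots to one extra point `∞`, written `none : Option (Fin n)`. The rook dot
generator `o_i` then behaves like a generator `t` joining `i` to `∞`, and the relations for `q` and
`o` become instances of the relations of one family `t x y` with `x, y ∈ [n] ∪ {∞}`.

From the presentation to symmetric relations. The letters `s_i` satisfy the Coxeter relations of
type `A`, so they come from a homomorphism `g` defined on the symmetric group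
(`Cox.exists_hom`). Each of `e`, `q`, `o` commutes with the image of the stabiliser of its index
set, hence extends by conjugation to families `e i` and `t x y` permuted by `g`
(`exists_equivariant`). Conjugating the defining relations gives the symmetric relations `Sys` for
all indices (`Gens.exists_sys`); conversely these imply the defining relations (`Sys.gens`).

Normal forms. In a monoid with symmetric relations, consider the elements
`tProd K * g σ * eProd D * tProd L`, where `tProd K` is the product of the `t x y` with
`K x y`, and `eProd D` is the product of the `e i` with `i ∉ D`. Here `K`, `L` are the upper and
lower kernels, as equivalence relations on `[n] ∪ {∞}`, and `σ` restricted to `D` joins classes of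
`L` to classes of `K`. The data are reduced (`Red`) if different points of `D` join different
classes, none of them that of `∞`. Up to the choice of representatives in the classes, which does
not affect the element (`Sys.nf_unique`), reduced data amount to a rook partition. The elements with
a reduced normal form contain `1` and are closed under right multiplication by `g τ`, `e i` and
`t x y` (`Sys.hasNF_mul_g`, `Sys.hasNF_mul_e`, `Sys.hasNF_mul_t`), so they exhaust the presented
monoid.

Separation. The normal forms are told apart in the monoid `BR n` of binary relations on the subsets
of `[n]`. A rook partition `α` gives the relation `col α` between `A` and `B` saying that `A ∪ B'` is
a union of blocks. This map is injective (`col_injective`) and multiplicative (`col_mul`): a union of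
blocks of a product extends to the product graph, so the product of rook partitions becomes the
composition of relations. In `BR n` the symmetric relations are immediate (`sys_br`), and reduced
data can be recovered, up to representatives, from the relation of their normal form
(`Sys.nf_inj`). Thus the homomorphism from the presented monoid to `BR n` is injective
(`toBR_injective`). It sends the class of a word `w` to `col (xiW hn w)` (`col_xiW`), which
determines the kernel of `ξ`. Since `col α` is always the relation of a normal form
(`exists_nf_br`), `ξ` is surjective.
-/

namespace RookPaper

/-- Reflexive–symmetric–transitive closure of a relation
(connectivity by paths in a graph). -/
inductive RClosure {V : Type*} (E : V → V → Prop) : V → V → Prop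
  | base {x y : V} : E x y → RClosure E x y
  | refl (x : V) : RClosure E x x
  | symm {x y : V} : RClosure E x y → RClosure E y x
  | trans {x y z : V} : RClosure E x y → RClosure E y z → RClosure E x z

/-- The 2n points `1,…,n` (`Sum.inl`) and `1',…,n'` (`Sum.inr`). -/
abbrev Pt (n : ℕ) := Fin n ⊕ Fin n

/-- A rook partition of degree `n`, encoded as a partial equivalence relation on the
`2n` points: its blocks are the equivalence classes of `rel`, and the rook dots are the
points `x` with `¬ rel x x`. -/
structure RP (n : ℕ) where
  rel : Pt n → Pt n → Prop
  symm : ∀ {x y : Pt n}, rel x y → rel y x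
  trans : ∀ {x y z : Pt n}, rel x y → rel y z → rel x z

/-- The underlying index in `[n]` of a point (`i` and `i'` both have index `i`). -/
def idx {n : ℕ} : Pt n → Fin n := Sum.elim id id

/-- For `A ⊆ [n]`, the corresponding set of upper points. -/
def upSet {n : ℕ} (A : Set (Fin n)) : Set (Pt n) := Sum.inl '' A

/-- For `B ⊆ [n]`, the set `B' = {b' : b ∈ B}` of lower points. -/
def dnSet {n : ℕ} (B : Set (Fin n)) : Set (Pt n) := Sum.inr '' B

/-- `x` is a rook dot of `α`. -/
def RP.IsRookDot {n : ℕ} (α : RP n) (x : Pt n) : Prop := ¬ α.rel x x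

/-- `α` has no rook dots, i.e. `α` lies in the partition monoid `P_n`. -/
def RP.NoDots {n : ℕ} (α : RP n) : Prop := ∀ x, α.rel x x

/-- `B` is a block of `α`. -/
def RP.IsBlock {n : ℕ} (α : RP n) (B : Set (Pt n)) : Prop :=
  ∃ x, α.rel x x ∧ B = {y | α.rel x y}

/-- The identity rook partition, with blocks `{i,i'}`. -/
instance {n : ℕ} : One (RP n) :=
  ⟨{ rel := fun x y => idx x = idx y
     symm := fun h => Eq.symm h
     trans := fun h h' => Eq.trans h h' }⟩

/-! The product graph `Γ(α,β)` lives on three rows of `n` vertices. -/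

abbrev V3 (n : ℕ) := Fin n ⊕ Pt n

def vTop {n : ℕ} (i : Fin n) : V3 n := Sum.inl i
def vMid {n : ℕ} (i : Fin n) : V3 n := Sum.inr (Sum.inl i)
def vBot {n : ℕ} (i : Fin n) : V3 n := Sum.inr (Sum.inr i)

/-- `α` occupies the top and middle rows. -/
def embA {n : ℕ} : Pt n → V3 n := Sum.elim vTop vMid
/-- `β` occupies the middle and bottom rows. -/
def embB {n : ℕ} : Pt n → V3 n := Sum.elim vMid vBot
/-- The product `αβ` lives on the top and bottom rows. -/
def embOut {n : ℕ} : Pt n → V3 n := Sum.elim vTop vBot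

/-- The edges of the product graph `Γ(α,β)`. -/
def pgEdge {n : ℕ} (α β : RP n) (x y : V3 n) : Prop :=
  (∃ a b : Pt n, α.rel a b ∧ x = embA a ∧ y = embA b) ∨
  (∃ a b : Pt n, β.rel a b ∧ x = embB a ∧ y = embB b)

/-- Connectivity (by a possibly empty path) in the product graph `Γ(α,β)`. -/
def pgConn {n : ℕ} (α β : RP n) : V3 n → V3 n → Prop :=
  RClosure (pgEdge α β)

/-- The white vertices of `Γ(α,β)`: a top vertex is white if it is a rook dot of `α`,
a bottom vertex is white if it is a rook dot of `β`, and a middle vertex is white if it is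
a rook dot of `α` (as a lower point) or of `β` (as an upper point). -/
def pgWhite {n : ℕ} (α β : RP n) (v : V3 n) : Prop :=
  (∃ i, v = vTop i ∧ ¬ α.rel (Sum.inl i) (Sum.inl i)) ∨
  (∃ i, v = vMid i ∧ (¬ α.rel (Sum.inr i) (Sum.inr i) ∨ ¬ β.rel (Sum.inl i) (Sum.inl i))) ∨
  (∃ i, v = vBot i ∧ ¬ β.rel (Sum.inr i) (Sum.inr i))

/-- The product of two rook partitions: a point of `αβ` is a rook dot iff it is connected
to a white vertex of `Γ(α,β)`, and two points are in the same block of `αβ` iff they are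
connected in `Γ(α,β)` (and are not rook dots). -/
instance {n : ℕ} : Mul (RP n) :=
  ⟨fun α β =>
    { rel := fun x y =>
        pgConn α β (embOut x) (embOut y) ∧
          ∀ w, pgWhite α β w → ¬ pgConn α β (embOut x) w
      symm := by
        intro x y h
        exact ⟨RClosure.symm h.1, fun w hw hc => h.2 w hw (RClosure.trans h.1 hc)⟩
      trans := by
        intro x y z h h'
        exact ⟨RClosure.trans h.1 h'.1, h.2⟩ }⟩

/-- The rook partition corresponding to a permutation `σ`: blocks `{i, (σ i)'}`. -/
def permRP {n : ℕ} (σ : Equiv.Perm (Fin n)) : RP n where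
  rel x y := Sum.elim (fun i => σ i) (fun i => i) x = Sum.elim (fun i => σ i) (fun i => i) y
  symm := fun h => Eq.symm h
  trans := fun h h' => Eq.trans h h'

/-- `α` lies in the copy of the symmetric group `S_n` inside `RP_n`. -/
def RP.IsPermDiag {n : ℕ} (α : RP n) : Prop := ∃ σ : Equiv.Perm (Fin n), α = permRP σ

/-- The generator `ē_i` : blocks `{j,j'}` for `j ≠ i`, and singleton blocks `{i}`, `{i'}`. -/
def ebar {n : ℕ} (i : Fin n) : RP n where
  rel x y := x = y ∨ (idx x = idx y ∧ idx x ≠ i)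
  symm := by
    rintro x y (rfl | ⟨h1, h2⟩)
    · exact Or.inl rfl
    · exact Or.inr ⟨h1.symm, h1 ▸ h2⟩
  trans := by
    rintro x y z (rfl | ⟨h1, h2⟩) h
    · exact h
    · rcases h with rfl | ⟨h3, h4⟩
      · exact Or.inr ⟨h1, h2⟩
      · exact Or.inr ⟨h1.trans h3, h2⟩

/-- The generator `t̄_ij` (for `i ≠ j`): blocks `{k,k'}` for `k ∉ {i,j}`, and `{i,j,i',j'}`. -/
def tbar {n : ℕ} (i j : Fin n) : RP n where
  rel x y := idx x = idx y ∨ ((idx x = i ∨ idx x = j) ∧ (idx y = i ∨ idx y = j))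
  symm := by
    rintro x y (h | ⟨h1, h2⟩)
    · exact Or.inl h.symm
    · exact Or.inr ⟨h2, h1⟩
  trans := by
    rintro x y z hxy hyz
    rcases hxy with h | ⟨h1, h2⟩
    · rcases hyz with h' | ⟨h3, h4⟩
      · exact Or.inl (h.trans h')
      · refine Or.inr ⟨?_, h4⟩
        rw [h]; exact h3
    · rcases hyz with h' | ⟨h3, h4⟩
      · refine Or.inr ⟨h1, ?_⟩
        rw [← h']; exact h2
      · exact Or.inr ⟨h1, h4⟩

/-- `ō_A` for a subset `A ⊆ [n]`: rook dots at all points of `A ∪ A'`, blocks `{j,j'}` for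
`j ∉ A`. -/
def obarS {n : ℕ} (A : Set (Fin n)) : RP n where
  rel x y := idx x = idx y ∧ idx x ∉ A
  symm := by
    rintro x y ⟨h1, h2⟩
    exact ⟨h1.symm, h1 ▸ h2⟩
  trans := by
    rintro x y z ⟨h1, h2⟩ ⟨h3, h4⟩
    exact ⟨h1.trans h3, h2⟩

/-- The generator `ō_i`: rook dots `i` and `i'`, blocks `{j,j'}` for `j ≠ i`. -/
def obar {n : ℕ} (i : Fin n) : RP n := obarS {i}

/-- For an index `i` of a simple transposition (`1 ≤ i ≤ n-1`, zero-based `Fin (n-1)`),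
the smaller of the two swapped points. -/
def lo {n : ℕ} (i : Fin (n - 1)) : Fin n := ⟨i.val, by have := i.isLt; omega⟩
/-- The larger of the two swapped points. -/
def hi {n : ℕ} (i : Fin (n - 1)) : Fin n := ⟨i.val + 1, by have := i.isLt; omega⟩

/-- The generator `s̄_i`: the simple transposition with blocks `{i,(i+1)'}`, `{i+1,i'}`,
and `{j,j'}` for other `j`. -/
def sbar {n : ℕ} (i : Fin (n - 1)) : RP n := permRP (Equiv.swap (lo i) (hi i))

/-- The generator `q̄_i = t̄_{i,i+1}`. -/
def qbar {n : ℕ} (i : Fin (n - 1)) : RP n := tbar (lo i) (hi i)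

/-- Membership in the subsemigroup generated by a subset `X`. -/
inductive SgGen {M : Type*} [Mul M] (X : Set M) : M → Prop
  | incl {x : M} : x ∈ X → SgGen X x
  | mul {a b : M} : SgGen X a → SgGen X b → SgGen X (a * b)

/-- Membership in the submonoid generated by a subset `X`. -/
inductive MonGen {M : Type*} [Mul M] [One M] (X : Set M) : M → Prop
  | one : MonGen X 1
  | incl {x : M} : x ∈ X → MonGen X x
  | mul {a b : M} : MonGen X a → MonGen X b → MonGen X (a * b)

/-- Evaluation of a word under a map on the letters (the product, in order, of the images
of the letters; the empty word evaluates to `1`). -/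
def evalWord {X M : Type*} [Mul M] [One M] (f : X → M) : List X → M
  | [] => 1
  | [x] => f x
  | x :: y :: w => f x * evalWord f (y :: w)

/-- The congruence on the free monoid of words (with product = concatenation) generated
by a set of pairs `R`.  Restricted to nonempty words it is the congruence on the free
semigroup generated by `R`. -/
inductive CongGen {X : Type*} (R : List X → List X → Prop) : List X → List X → Prop
  | rel {u v : List X} : R u v → CongGen R u v
  | refl (u : List X) : CongGen R u u
  | symm {u v : List X} : CongGen R u v → CongGen R v u
  | trans {u v w : List X} : CongGen R u v → CongGen R v w → CongGen R u w
  | mul {u v u' v' : List X} : CongGen R u v → CongGen R u' v' → CongGen R (u ++ u') (v ++ v')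


/-! ## The alphabet S ∪ {e,q,o} and the relations (R44)–(R59) -/

/-- The alphabet `S ∪ {e, q, o}`. -/
inductive SEQO1 (n : ℕ) : Type
  | s : Fin (n - 1) → SEQO1 n
  | e : SEQO1 n
  | q : SEQO1 n
  | o : SEQO1 n

/-- The letter `s_1`. -/
def s1' {n : ℕ} (h : 0 < n - 1) : SEQO1 n := .s ⟨0, h⟩
/-- The letter `s_2`. -/
def s2' {n : ℕ} (h : 1 < n - 1) : SEQO1 n := .s ⟨1, h⟩
/-- The letter `s_3`. -/
def s3' {n : ℕ} (h : 2 < n - 1) : SEQO1 n := .s ⟨2, h⟩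

/-- The relations (R44)–(R59); a relation mentioning a letter `s_i` with `i > n-1` is
present only under the hypothesis that the letter exists. -/
inductive RelSEQO1 (n : ℕ) : List (SEQO1 n) → List (SEQO1 n) → Prop
  | r44 (i : Fin (n - 1)) : RelSEQO1 n [.s i, .s i] []
  | r45 (i j : Fin (n - 1)) (h : i.val + 1 < j.val ∨ j.val + 1 < i.val) :
      RelSEQO1 n [.s i, .s j] [.s j, .s i]
  | r46 (i j : Fin (n - 1)) (h : i.val + 1 = j.val ∨ j.val + 1 = i.val) :
      RelSEQO1 n [.s i, .s j, .s i] [.s j, .s i, .s j]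
  | r47a : RelSEQO1 n [.e, .e] [.e]
  | r47b : RelSEQO1 n [.e] [.e, .q, .e]
  | r47c : RelSEQO1 n [.e] [.e, .o, .e]
  | r48a : RelSEQO1 n [.q, .q] [.q]
  | r48b : RelSEQO1 n [.q] [.q, .e, .q]
  | r48c (h : 0 < n - 1) : RelSEQO1 n [.q] [.q, s1' h]
  | r48d (h : 0 < n - 1) : RelSEQO1 n [.q] [s1' h, .q]
  | r49 (i : Fin (n - 1)) (h : 1 ≤ i.val) : RelSEQO1 n [.e, .s i] [.s i, .e]
  | r50 (i : Fin (n - 1)) (h : 2 ≤ i.val) : RelSEQO1 n [.q, .s i] [.s i, .q]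
  | r51a (h : 0 < n - 1) :
      RelSEQO1 n [s1' h, .e, s1' h, .e] [.e, s1' h, .e, s1' h]
  | r51b (h : 0 < n - 1) : RelSEQO1 n [.e, s1' h, .e, s1' h] [.e, s1' h, .e]
  | r52 (h : 1 < n - 1) : RelSEQO1 n [.q, s2' h, .q, s2' h] [s2' h, .q, s2' h, .q]
  | r53 (h : 2 < n - 1) :
      RelSEQO1 n
        ([.q] ++ [s2' (by omega), s1' (by omega), s3' h, s2' (by omega)] ++ [.q] ++
          [s2' (by omega), s1' (by omega), s3' h, s2' (by omega)])
        ([s2' (by omega), s1' (by omega), s3' h, s2' (by omega)] ++ [.q] ++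
          [s2' (by omega), s1' (by omega), s3' h, s2' (by omega)] ++ [.q])
  | r54 (h : 1 < n - 1) :
      RelSEQO1 n ([.q] ++ [s2' h, s1' (by omega), .e, s1' (by omega), s2' h])
        ([s2' h, s1' (by omega), .e, s1' (by omega), s2' h] ++ [.q])
  | r55a : RelSEQO1 n [.o, .o] [.o]
  | r55b : RelSEQO1 n [.o] [.o, .e, .o]
  | r56 (i : Fin (n - 1)) (h : 1 ≤ i.val) : RelSEQO1 n [.o, .s i] [.s i, .o]
  | r57a (h : 0 < n - 1) :
      RelSEQO1 n [.o, s1' h, .o, s1' h] [s1' h, .o, s1' h, .o]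
  | r57b (h : 0 < n - 1) : RelSEQO1 n [s1' h, .o, s1' h, .o] [.o, s1' h, .o]
  | r57c (h : 0 < n - 1) : RelSEQO1 n [.o, s1' h, .o] [.o, .q]
  | r57d : RelSEQO1 n [.o, .q] [.q, .o]
  | r58 (h : 0 < n - 1) : RelSEQO1 n [.e, s1' h, .o, s1' h] [s1' h, .o, s1' h, .e]
  | r59 (h : 1 < n - 1) :
      RelSEQO1 n ([.q] ++ [s2' h, s1' (by omega), .o, s1' (by omega), s2' h])
        ([s2' h, s1' (by omega), .o, s1' (by omega), s2' h] ++ [.q])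

/-- The map `ξ` on letters: `s_i ↦ s̄_i`, `e ↦ ē_1`, `q ↦ q̄_1`, `o ↦ ō_1`. -/
def xiLetter {n : ℕ} (hn : 2 ≤ n) : SEQO1 n → RP n
  | .s i => sbar i
  | .e => ebar ⟨0, by omega⟩
  | .q => qbar ⟨0, by omega⟩
  | .o => obar ⟨0, by omega⟩

/-- The homomorphism `ξ : (S ∪ {e,q,o})* → RP_n`. -/
def xiW {n : ℕ} (hn : 2 ≤ n) : List (SEQO1 n) → RP n := evalWord (xiLetter hn)

/-! ### The symmetric group -/

section Coxeter

variable {M : Type*} [Monoid M]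

/-- The descending product `a (j+d-1) * ⋯ * a (j+1) * a j`. -/
def desc (a : ℕ → M) (j : ℕ) : ℕ → M
  | 0 => 1
  | d + 1 => a (j + d) * desc a j d

theorem desc_succ' (a : ℕ → M) (j d : ℕ) : desc a j (d + 1) = desc a (j + 1) d * a j := by
  induction d with
  | zero => simp [desc]
  | succ d ih =>
    rw [desc, ih, desc, mul_assoc]
    congr 2
    omega

/-- The Coxeter relations of type `A` for `a 0, …, a (N-1)`. -/
structure Cox (N : ℕ) (a : ℕ → M) : Prop where
  sq : ∀ i < N, a i * a i = 1
  comm : ∀ i j, i + 1 < j → j < N → a i * a j = a j * a i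
  braid : ∀ i, i + 1 < N → a i * a (i + 1) * a i = a (i + 1) * a i * a (i + 1)

variable {N : ℕ} {a : ℕ → M}

theorem Cox.desc_comm_low (h : Cox N a) (i j d : ℕ) (hi : i + 1 < j) (hd : j + d ≤ N) :
    desc a j d * a i = a i * desc a j d := by
  induction d with
  | zero => simp [desc]
  | succ d ih =>
    rw [desc, mul_assoc, ih (by omega), ← mul_assoc, ← mul_assoc,
      h.comm i (j + d) (by omega) (by omega)]

theorem Cox.desc_comm_high (h : Cox N a) (i j d : ℕ) (hi : j + d < i) (hN : i < N) :
    desc a j d * a i = a i * desc a j d := by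
  induction d with
  | zero => simp [desc]
  | succ d ih =>
    rw [desc, mul_assoc, ih (by omega), ← mul_assoc, ← mul_assoc,
      h.comm (j + d) i (by omega) (by omega)]

/-- The braid relation pushes a letter through a descending product, lowering its index. -/
theorem Cox.desc_shift (h : Cox N a) (i j d : ℕ) (hi : j ≤ i) (hid : i < j + d)
    (hd : j + d < N) : desc a j (d + 1) * a (i + 1) = a i * desc a j (d + 1) := by
  induction d with
  | zero => omega
  | succ d ih =>
    rcases Nat.lt_or_ge i (j + d) with h1 | h1
    · rw [desc, mul_assoc, ih h1 (by omega), ← mul_assoc, ← mul_assoc,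
        h.comm i (j + (d + 1)) (by omega) (by omega)]
    · obtain rfl : i = j + d := by omega
      have h2 := h.desc_comm_high (j + d + 1) j d (by omega) (by omega)
      have h3 := h.braid (j + d) (by omega)
      calc desc a j (d + 1 + 1) * a (j + d + 1)
          = a (j + d + 1) * a (j + d) * (desc a j d * a (j + d + 1)) := by
            simp only [desc, mul_assoc, Nat.add_assoc]
        _ = (a (j + d + 1) * a (j + d) * a (j + d + 1)) * desc a j d := by
            rw [h2]; simp only [mul_assoc]
        _ = a (j + d) * desc a j (d + 1 + 1) := by
            rw [← h3]; simp only [desc, mul_assoc, Nat.add_assoc]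

/-- Every product of `a 0, …, a k` is a product of `a 0, …, a (k-1)` times a descending
product starting at `a k`. -/
theorem Cox.exists_desc (h : Cox N a) (k : ℕ) (hk : k < N) (x : M)
    (hx : x ∈ Submonoid.closure {y | ∃ i < k + 1, y = a i}) :
    ∃ y ∈ Submonoid.closure {y | ∃ i < k, y = a i}, ∃ j d, j + d = k + 1 ∧
      x = y * desc a j d := by
  induction hx using Submonoid.closure_induction_right with
  | one => exact ⟨1, one_mem _, k + 1, 0, rfl, by simp [desc]⟩
  | mul_right x _ y hy ih =>
    obtain ⟨i, hi, rfl⟩ := hy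
    obtain ⟨z, hz, j, d, hjd, rfl⟩ := ih
    have mem : ∀ i < k, a i ∈ Submonoid.closure {y | ∃ i < k, y = a i} := fun i hi =>
      Submonoid.subset_closure ⟨i, hi, rfl⟩
    rcases Nat.lt_trichotomy i j with h1 | h1 | h1
    · rcases Nat.lt_or_ge (i + 1) j with h2 | h2
      · refine ⟨z * a i, mul_mem hz (mem i (by omega)), j, d, hjd, ?_⟩
        rw [mul_assoc, mul_assoc, h.desc_comm_low i j d h2 (by omega)]
      · obtain rfl : j = i + 1 := by omega
        exact ⟨z, hz, i, d + 1, by omega, by rw [desc_succ', mul_assoc]⟩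
    · subst h1
      obtain ⟨d, rfl⟩ : ∃ d', d = d' + 1 := ⟨d - 1, by omega⟩
      refine ⟨z, hz, i + 1, d, by omega, ?_⟩
      rw [desc_succ', mul_assoc, mul_assoc, h.sq i (by omega), mul_one]
    · obtain ⟨i, rfl⟩ : ∃ i', i = i' + 1 := ⟨i - 1, by omega⟩
      obtain ⟨d, rfl⟩ : ∃ d', d = d' + 1 := ⟨d - 1, by omega⟩
      refine ⟨z * a i, mul_mem hz (mem i (by omega)), j, d + 1, hjd, ?_⟩
      rw [mul_assoc, mul_assoc, h.desc_shift i j d (by omega) (by omega) (by omega)]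

end Coxeter

section PermHom

/-- The adjacent transposition of `i` and `i + 1`, for a natural number `i`. -/
def adj (n i : ℕ) : Equiv.Perm (Fin n) :=
  if h : i + 1 < n then Equiv.swap ⟨i, by omega⟩ ⟨i + 1, h⟩ else 1

theorem adj_apply_of_ne {n i : ℕ} (x : Fin n) (h1 : x.val ≠ i) (h2 : x.val ≠ i + 1) :
    adj n i x = x := by
  unfold adj
  split_ifs with h
  · apply Equiv.swap_apply_of_ne_of_ne <;> (intro hh; subst hh; simp at h1 h2)
  · rfl

theorem adj_apply_left {n i : ℕ} (h : i + 1 < n) : adj n i ⟨i, by omega⟩ = ⟨i + 1, h⟩ := by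
  simp [adj, h]

theorem adj_apply_right {n i : ℕ} (h : i + 1 < n) : adj n i ⟨i + 1, h⟩ = ⟨i, by omega⟩ := by
  simp [adj, h]

theorem adj_val {n i : ℕ} (h : i + 1 < n) (x : Fin n) :
    (adj n i x).val = if x.val = i then i + 1 else if x.val = i + 1 then i else x.val := by
  unfold adj
  rw [dif_pos h, Equiv.swap_apply_def]
  simp only [Fin.ext_iff]
  split_ifs <;> rfl

theorem cox_adj (n : ℕ) : Cox (n - 1) (adj n) where
  sq i hi := by
    ext x
    simp only [Equiv.Perm.mul_apply, Equiv.Perm.one_apply, adj_val (show i + 1 < n by omega)]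
    split_ifs <;> omega
  comm i j hij hj := by
    ext x
    simp only [Equiv.Perm.mul_apply, adj_val (show i + 1 < n by omega),
      adj_val (show j + 1 < n by omega)]
    split_ifs <;> omega
  braid i hi := by
    ext x
    simp only [Equiv.Perm.mul_apply, adj_val (show i + 1 < n by omega),
      adj_val (show i + 1 + 1 < n by omega)]
    split_ifs <;> omega

/-- A permutation fixing all points below `k` is a product of adjacent transpositions
moving only points from `k` on. -/
theorem mem_closure_adj {n : ℕ} (k : ℕ) (f : Equiv.Perm (Fin n))
    (hf : ∀ x : Fin n, x.val < k → f x = x) :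
    f ∈ Subgroup.closure {g | ∃ i, k ≤ i ∧ i + 1 < n ∧ g = adj n i} := by
  rw [mem_closure_isSwap]
  · refine ⟨Set.toFinite _, fun x => ?_⟩
    set H := Subgroup.closure {g | ∃ i, k ≤ i ∧ i + 1 < n ∧ g = adj n i} with hH
    by_cases hx : x.val < k
    · rw [hf x hx]; exact MulAction.mem_orbit_self x
    have key : ∀ d (h : k + d < n),
        (⟨k + d, h⟩ : Fin n) ∈ MulAction.orbit H (⟨k, by omega⟩ : Fin n) := by
      intro d
      induction d with
      | zero => intro h; exact MulAction.mem_orbit_self _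
      | succ d ih =>
        intro h
        have h1 := ih (by omega)
        have h2 : adj n (k + d) ∈ H := Subgroup.subset_closure ⟨k + d, by omega, by omega, rfl⟩
        have h3 := MulAction.mem_orbit_of_mem_orbit (⟨_, h2⟩ : H) h1
        have h4 : (⟨_, h2⟩ : H) • (⟨k + d, by omega⟩ : Fin n) = ⟨k + (d + 1), h⟩ :=
          adj_apply_left (i := k + d) h
        rwa [h4] at h3
    have hfx : ¬ (f x).val < k := fun hlt => by
      have := f.injective (hf _ hlt)
      rw [this] at hlt; exact hx hlt
    have e1 := key (x.val - k) (by omega)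
    have e2 := key ((f x).val - k) (by omega)
    have e3 : (⟨k + (x.val - k), by omega⟩ : Fin n) = x := Fin.ext (by simp; omega)
    have e4 : (⟨k + ((f x).val - k), by omega⟩ : Fin n) = f x := Fin.ext (by simp; omega)
    rw [e3] at e1; rw [e4] at e2
    rw [← MulAction.orbit_eq_iff] at e1 e2 ⊢
    rw [e1, e2]
  · rintro g ⟨i, -, hi, rfl⟩
    exact ⟨⟨i, by omega⟩, ⟨i + 1, hi⟩, by simp [Fin.ext_iff], by simp [adj, hi]⟩

variable {M : Type*} [Monoid M]

theorem desc_adj_apply {n : ℕ} (j d : ℕ) (h : j + d < n) :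
    desc (adj n) j d ⟨j, by omega⟩ = ⟨j + d, h⟩ := by
  induction d with
  | zero => rfl
  | succ d ih =>
    rw [desc, Equiv.Perm.mul_apply, ih (by omega)]
    exact adj_apply_left (i := j + d) h

theorem desc_prod {M' : Type*} [Monoid M'] (a : ℕ → M) (b : ℕ → M') (j d : ℕ) :
    desc (fun i => (a i, b i)) j d = (desc a j d, desc b j d) := by
  induction d with
  | zero => rfl
  | succ d ih => rw [desc, ih]; rfl

/-- A product of the letters of a Coxeter family is determined by the corresponding
permutation. -/
theorem Cox.unique {n : ℕ} {a : ℕ → M} (h : Cox (n - 1) a) (k : ℕ) (hk : k ≤ n - 1)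
    (x y : M × Equiv.Perm (Fin n))
    (hx : x ∈ Submonoid.closure {y | ∃ i < k, y = (a i, adj n i)})
    (hy : y ∈ Submonoid.closure {y | ∃ i < k, y = (a i, adj n i)})
    (hxy : x.2 = y.2) : x = y := by
  induction k generalizing x y with
  | zero => simp at hx hy; rw [hx, hy]
  | succ k ih =>
    have hc : Cox (n - 1) (fun i => (a i, adj n i)) := by
      refine ⟨fun i hi => ?_, fun i j hij hj => ?_, fun i hi => ?_⟩
      · exact Prod.ext (h.sq i hi) ((cox_adj n).sq i hi)
      · exact Prod.ext (h.comm i j hij hj) ((cox_adj n).comm i j hij hj)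
      · exact Prod.ext (h.braid i hi) ((cox_adj n).braid i hi)
    have fix : ∀ z ∈ Submonoid.closure {y | ∃ i < k, y = (a i, adj n i)},
        z.2 ⟨k + 1, by omega⟩ = ⟨k + 1, by omega⟩ := by
      intro z hz
      induction hz using Submonoid.closure_induction with
      | mem z hz =>
        obtain ⟨i, hi, rfl⟩ := hz
        exact adj_apply_of_ne _ (by simp; omega) (by simp; omega)
      | one => rfl
      | mul u v _ _ hu hv => rw [Prod.snd_mul, Equiv.Perm.mul_apply, hv, hu]
    obtain ⟨x, hx1, j, d, hjd, rfl⟩ := hc.exists_desc k (by omega) x hx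
    obtain ⟨y, hy1, j', d', hjd', rfl⟩ := hc.exists_desc k (by omega) y hy
    rw [desc_prod, desc_prod] at hxy
    have top : ∀ z ∈ Submonoid.closure {y | ∃ i < k, y = (a i, adj n i)},
        ∀ j d (h : j + d = k + 1), (z.2 * desc (adj n) j d) ⟨j, by omega⟩ = ⟨k + 1, by omega⟩ := by
      intro z hz j d h
      rw [Equiv.Perm.mul_apply, desc_adj_apply j d (by omega)]
      simp only [h]
      exact fix z hz
    have h1 := top x hx1 j d hjd
    have h2 := top y hy1 j' d' hjd'
    simp only [Prod.snd_mul] at hxy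
    rw [hxy, ← h2] at h1
    have h3 := congrArg Fin.val (Equiv.injective _ h1)
    simp only at h3
    subst h3
    obtain rfl : d = d' := by omega
    rw [ih (by omega) x y hx1 hy1 (mul_right_cancel hxy)]

/-- The symmetric group is presented by its adjacent transpositions and the Coxeter
relations. -/
theorem Cox.exists_hom {n : ℕ} {a : ℕ → M} (h : Cox (n - 1) a) :
    ∃ g : Equiv.Perm (Fin n) →* M, ∀ i, i + 1 < n → g (adj n i) = a i := by
  set H := Submonoid.closure {y : M × Equiv.Perm (Fin n) | ∃ i < n - 1, y = (a i, adj n i)}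
    with hH
  have ex : ∀ σ : Equiv.Perm (Fin n), ∃ m, (m, σ) ∈ H := by
    intro σ
    have hσ := mem_closure_adj 0 σ (by simp)
    induction hσ using Subgroup.closure_induction'' with
    | mem x hx =>
      obtain ⟨i, -, hi, rfl⟩ := hx
      exact ⟨a i, Submonoid.subset_closure ⟨i, by omega, rfl⟩⟩
    | inv_mem x hx =>
      obtain ⟨i, -, hi, rfl⟩ := hx
      refine ⟨a i, Submonoid.subset_closure ⟨i, by omega, ?_⟩⟩
      rw [inv_eq_of_mul_eq_one_left ((cox_adj n).sq i (by omega))]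
    | one => exact ⟨1, one_mem _⟩
    | mul x y _ _ hx hy =>
      obtain ⟨m, hm⟩ := hx
      obtain ⟨m', hm'⟩ := hy
      exact ⟨m * m', mul_mem hm hm'⟩
  choose g hg using ex
  have uniq : ∀ m σ, (m, σ) ∈ H → g σ = m := fun m σ hm =>
    congrArg Prod.fst (h.unique (n - 1) le_rfl _ _ (hg σ) hm rfl)
  exact ⟨⟨⟨g, uniq _ _ (one_mem _)⟩, fun σ τ => uniq _ _ (mul_mem (hg σ) (hg τ))⟩,
    fun i hi => uniq _ _ (Submonoid.subset_closure ⟨i, by omega, rfl⟩)⟩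

end PermHom

/-! ### From the defining relations to a symmetric family of relations -/

section Families

variable {M : Type*} [Monoid M]

/-- An element commuting with the stabiliser of a point `y₀` extends to an equivariant family,
indexed by a `G`-set (and equal to `1` off the orbit of `y₀`). -/
theorem exists_equivariant {G Y : Type*} [Group G] [MulAction G Y] (g : G →* M) (y₀ : Y) (x : M)
    (hx : ∀ σ : G, σ • y₀ = y₀ → g σ * x = x * g σ) :
    ∃ F : Y → M, F y₀ = x ∧ (∀ σ y, g σ * F y = F (σ • y) * g σ) ∧
      ∀ y, (∀ σ : G, σ • y₀ ≠ y) → F y = 1 := by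
  classical
  have inv : ∀ σ : G, g σ⁻¹ * g σ = 1 := fun σ => by rw [← map_mul]; simp
  let F : Y → M := fun y =>
    if h : ∃ σ : G, σ • y₀ = y then g h.choose * x * g h.choose⁻¹ else 1
  have hF : ∀ σ : G, F (σ • y₀) = g σ * x * g σ⁻¹ := by
    intro σ
    have h : ∃ τ : G, τ • y₀ = σ • y₀ := ⟨σ, rfl⟩
    have h1 : F (σ • y₀) = g h.choose * x * g h.choose⁻¹ := dif_pos h
    have h2 := hx (σ⁻¹ * h.choose) (by rw [mul_smul, h.choose_spec, inv_smul_smul])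
    rw [h1]
    calc g h.choose * x * g h.choose⁻¹
        = g σ * (g (σ⁻¹ * h.choose) * x) * g h.choose⁻¹ := by
          rw [← mul_assoc, ← map_mul, mul_inv_cancel_left]
      _ = g σ * x * (g (σ⁻¹ * h.choose) * g h.choose⁻¹) := by
          rw [h2]; simp only [mul_assoc]
      _ = _ := by rw [← map_mul, mul_inv_cancel_right]
  refine ⟨F, by simpa using hF 1, fun σ y => ?_, fun y hy => ?_⟩
  · by_cases h : ∃ τ : G, τ • y₀ = y
    · obtain ⟨τ, rfl⟩ := h
      rw [← mul_smul, hF, hF, mul_inv_rev, map_mul, map_mul]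
      simp only [mul_assoc, inv, mul_one]
    · have h1 : F y = 1 := dif_neg h
      have h2 : F (σ • y) = 1 :=
        dif_neg (fun ⟨τ, hτ⟩ => h ⟨σ⁻¹ * τ, by rw [mul_smul, hτ, inv_smul_smul]⟩)
      rw [h1, h2, mul_one, one_mul]
  · exact dif_neg (fun ⟨σ, hσ⟩ => hy σ hσ)

/-- The relations of the presentation, for elements `a i` (`i < n - 1`), `e`, `q`, `o` of an
arbitrary monoid. -/
structure Gens (n : ℕ) (a : ℕ → M) (e q o : M) : Prop where
  cox : Cox (n - 1) a
  ee : e * e = e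
  eqe : e * q * e = e
  eoe : e * o * e = e
  qq : q * q = q
  qeq : q * e * q = q
  qa : q * a 0 = q
  aq : a 0 * q = q
  e_a : ∀ i, 1 ≤ i → i < n - 1 → e * a i = a i * e
  q_a : ∀ i, 2 ≤ i → i < n - 1 → q * a i = a i * q
  eaea : a 0 * e * a 0 * e = e * a 0 * e * a 0
  eaea' : e * a 0 * e * a 0 = e * a 0 * e
  qaqa : 1 < n - 1 → q * a 1 * q * a 1 = a 1 * q * a 1 * q
  qwqw : 2 < n - 1 → q * (a 1 * a 0 * a 2 * a 1) * q * (a 1 * a 0 * a 2 * a 1) =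
    (a 1 * a 0 * a 2 * a 1) * q * (a 1 * a 0 * a 2 * a 1) * q
  q_e : 1 < n - 1 → q * (a 1 * a 0 * e * a 0 * a 1) = (a 1 * a 0 * e * a 0 * a 1) * q
  oo : o * o = o
  oeo : o * e * o = o
  o_a : ∀ i, 1 ≤ i → i < n - 1 → o * a i = a i * o
  oaoa : o * a 0 * o * a 0 = a 0 * o * a 0 * o
  aoao : a 0 * o * a 0 * o = o * a 0 * o
  oao : o * a 0 * o = o * q
  oq : o * q = q * o
  e_o : e * a 0 * o * a 0 = a 0 * o * a 0 * e
  q_o : 1 < n - 1 → q * (a 1 * a 0 * o * a 0 * a 1) = (a 1 * a 0 * o * a 0 * a 1) * q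

/-- A homomorphism `g` from the symmetric group together with families `e i` and `t x y`
satisfying the symmetric relations of rook partition monoids. Here `x, y : Option (Fin n)`, where
`none` stands for one extra point `∞` to which all rook dots are attached: `t (some i) none` is
the rook dot generator `o_i`. -/
structure Sys {n : ℕ} (g : Equiv.Perm (Fin n) →* M) (e : Fin n → M)
    (t : Option (Fin n) → Option (Fin n) → M) : Prop where
  g_e : ∀ σ i, g σ * e i = e (σ i) * g σ
  g_t : ∀ σ x y, g σ * t x y = t (x.map σ) (y.map σ) * g σ
  e_idem : ∀ i, e i * e i = e i
  e_comm : ∀ i j, e i * e j = e j * e i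
  e_swap : ∀ i j, i ≠ j → e i * e j * g (Equiv.swap i j) = e i * e j
  t_self : ∀ x, t x x = 1
  t_symm : ∀ x y, t x y = t y x
  t_idem : ∀ x y, t x y * t x y = t x y
  t_comm : ∀ x y z w, t x y * t z w = t z w * t x y
  t_trans : ∀ x y z, t x y * t y z = t x y * t x z
  t_swap : ∀ i j, t (some i) (some j) * g (Equiv.swap i j) = t (some i) (some j)
  e_t : ∀ i x y, x ≠ some i → y ≠ some i → e i * t x y = t x y * e i
  ete : ∀ i x, x ≠ some i → e i * t (some i) x * e i = e i
  tet : ∀ i x, x ≠ some i → t (some i) x * e i * t (some i) x = t (some i) x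

/-- Conjugation by the image of a group element. -/
def cj {G : Type*} [Group G] (g : G →* M) (σ : G) : M →* M where
  toFun x := g σ * x * g σ⁻¹
  map_one' := by rw [mul_one, ← map_mul]; simp
  map_mul' x y := by
    have : g σ⁻¹ * g σ = 1 := by rw [← map_mul]; simp
    calc g σ * (x * y) * g σ⁻¹ = g σ * x * (1 * y) * g σ⁻¹ := by simp only [mul_assoc, one_mul]
      _ = _ := by rw [← this]; simp only [mul_assoc]

theorem cj_eq {G : Type*} [Group G] {g : G →* M} {σ : G} {x y : M}
    (h : g σ * x = y * g σ) : cj g σ x = y := by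
  change g σ * x * g σ⁻¹ = y
  rw [h, mul_assoc, ← map_mul]; simp

theorem cj_g {G : Type*} [Group G] (g : G →* M) (σ τ : G) :
    cj g σ (g τ) = g (σ * τ * σ⁻¹) := by
  change g σ * g τ * g σ⁻¹ = _
  rw [map_mul, map_mul]

theorem exists_perm {n k : ℕ} (hk : k ≤ n) (f : Fin k → Fin n) (hf : Function.Injective f) :
    ∃ σ : Equiv.Perm (Fin n), ∀ l : Fin k, σ ⟨l.val, by omega⟩ = f l := by
  have := Equiv.Perm.isMultiplyPretransitive (Fin n) k
  obtain ⟨σ, hσ⟩ := MulAction.exists_smul_eq (Equiv.Perm (Fin n))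
    (⟨fun l => ⟨l.val, by omega⟩, fun a b h => by simpa [Fin.ext_iff] using h⟩ : Fin k ↪ Fin n)
    (⟨f, hf⟩ : Fin k ↪ Fin n)
  exact ⟨σ, fun l => DFunLike.congr_fun hσ l⟩

theorem exists_perm2 {n : ℕ} (hn : 2 ≤ n) (i j : Fin n) (hij : i ≠ j) :
    ∃ σ : Equiv.Perm (Fin n), σ ⟨0, by omega⟩ = i ∧ σ ⟨1, by omega⟩ = j := by
  obtain ⟨σ, h⟩ := exists_perm hn ![i, j] (by
    intro a b; fin_cases a <;> fin_cases b <;> simp [hij, hij.symm])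
  exact ⟨σ, h 0, h 1⟩

theorem exists_perm3 {n : ℕ} (i j k : Fin n) (hij : i ≠ j) (hik : i ≠ k) (hjk : j ≠ k) :
    ∃ (h : 3 ≤ n) (σ : Equiv.Perm (Fin n)),
      σ ⟨0, by omega⟩ = i ∧ σ ⟨1, by omega⟩ = j ∧ σ ⟨2, by omega⟩ = k := by
  have hinj : Function.Injective ![i, j, k] := by
    intro a b; fin_cases a <;> fin_cases b <;>
      simp [hij, hij.symm, hik, hik.symm, hjk, hjk.symm]
  have hn : 3 ≤ n := by simpa using Fintype.card_le_of_injective _ hinj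
  obtain ⟨σ, h⟩ := exists_perm hn ![i, j, k] hinj
  exact ⟨hn, σ, h 0, h 1, h 2⟩

theorem exists_perm4 {n : ℕ} (i j k l : Fin n) (hij : i ≠ j) (hik : i ≠ k) (hjk : j ≠ k)
    (hil : i ≠ l) (hjl : j ≠ l) (hkl : k ≠ l) :
    ∃ (h : 4 ≤ n) (σ : Equiv.Perm (Fin n)),
      σ ⟨0, by omega⟩ = i ∧ σ ⟨1, by omega⟩ = j ∧ σ ⟨2, by omega⟩ = k ∧ σ ⟨3, by omega⟩ = l := by
  have hinj : Function.Injective ![i, j, k, l] := by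
    intro a b; fin_cases a <;> fin_cases b <;>
      simp [hij, hij.symm, hik, hik.symm, hjk, hjk.symm, hil, hil.symm, hjl, hjl.symm,
        hkl, hkl.symm]
  have hn : 4 ≤ n := by simpa using Fintype.card_le_of_injective _ hinj
  obtain ⟨σ, h⟩ := exists_perm hn ![i, j, k, l] hinj
  exact ⟨hn, σ, h 0, h 1, h 2, h 3⟩

variable {n : ℕ} {a : ℕ → M} {e q o : M}

/-- The defining relations imply the symmetric relations: each instance of the latter is
conjugate, by a permutation, to an instance involving the first few points only. -/
theorem Gens.exists_sys (hn : 2 ≤ n) (H : Gens n a e q o) :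
    ∃ g : Equiv.Perm (Fin n) →* M, ∃ E t, Sys g E t ∧ (∀ i, i + 1 < n → g (adj n i) = a i) ∧
      E ⟨0, by omega⟩ = e ∧ t (some ⟨0, by omega⟩) (some ⟨1, by omega⟩) = q ∧
      t (some ⟨0, by omega⟩) none = o := by
  obtain ⟨g, hg⟩ := H.cox.exists_hom
  -- an element commuting with the letters `a i`, `i ≥ k`, commutes with all permutations
  -- fixing the first `k` points
  have stab : ∀ (k : ℕ) (x : M), (∀ i, k ≤ i → i < n - 1 → x * a i = a i * x) →
      ∀ σ : Equiv.Perm (Fin n), (∀ y : Fin n, y.val < k → σ y = y) → g σ * x = x * g σ := by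
    intro k x hx σ hσ
    have := mem_closure_adj k σ hσ
    clear hσ
    induction this using Subgroup.closure_induction'' with
    | mem y hy =>
      obtain ⟨i, hi, hin, rfl⟩ := hy
      rw [hg i hin, hx i hi (by omega)]
    | inv_mem y hy =>
      obtain ⟨i, hi, hin, rfl⟩ := hy
      rw [inv_eq_of_mul_eq_one_left ((cox_adj n).sq i (by omega)), hg i hin, hx i hi (by omega)]
    | one => simp
    | mul y z _ _ hy hz => rw [map_mul, mul_assoc, hz, ← mul_assoc, hy, mul_assoc]
  have h0 : 0 < n := by omega
  have h1 : 1 < n := by omega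
  obtain ⟨E, hE0, hE, -⟩ := exists_equivariant g (⟨0, h0⟩ : Fin n) e (fun σ hσ =>
    stab 1 e H.e_a σ (fun y hy => by
      obtain rfl : y = ⟨0, h0⟩ := Fin.ext (by simpa using hy)
      exact hσ))
  obtain ⟨O, hO0, hO, -⟩ := exists_equivariant g (⟨0, h0⟩ : Fin n) o (fun σ hσ =>
    stab 1 o H.o_a σ (fun y hy => by
      obtain rfl : y = ⟨0, h0⟩ := Fin.ext (by simpa using hy)
      exact hσ))
  obtain ⟨Q, hQ0, hQ, hQ1⟩ := exists_equivariant g ((⟨0, h0⟩, ⟨1, h1⟩) : Fin n × Fin n) q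
    (fun σ hσ => stab 2 q H.q_a σ (fun y hy => by
      obtain ⟨hσ0, hσ1⟩ := Prod.ext_iff.mp hσ
      obtain h | h : y.val = 0 ∨ y.val = 1 := by omega
      · obtain rfl : y = ⟨0, h0⟩ := Fin.ext h
        exact hσ0
      · obtain rfl : y = ⟨1, h1⟩ := Fin.ext h
        exact hσ1))
  have : Nontrivial (Fin n) := Fin.nontrivial_iff_two_le.mpr hn
  have cE : ∀ σ i, cj g σ (E i) = E (σ i) := fun σ i => cj_eq (hE σ i)
  have cO : ∀ σ i, cj g σ (O i) = O (σ i) := fun σ i => cj_eq (hO σ i)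
  have cQ : ∀ σ i j, cj g σ (Q (i, j)) = Q (σ i, σ j) := fun σ i j => cj_eq (hQ σ (i, j))
  have cS : ∀ σ i j, cj g σ (g (Equiv.swap i j)) = g (Equiv.swap (σ i) (σ j)) := fun σ i j => by
    rw [cj_g, Equiv.swap_apply_apply]
  have cA : ∀ i, i + 1 < n → ∀ x, cj g (adj n i) x = a i * x * a i := fun i hi x => by
    change g (adj n i) * x * g (adj n i)⁻¹ = _
    rw [inv_eq_of_mul_eq_one_left ((cox_adj n).sq i (by omega)), hg i hi]
  have a00 : a 0 * a 0 = 1 := H.cox.sq 0 (by omega)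
  have sw01 : g (Equiv.swap ⟨0, h0⟩ ⟨1, h1⟩) = a 0 := by
    rw [← hg 0 h1]; simp [adj, h1]
  have ad0 : adj n 0 ⟨0, h0⟩ = ⟨1, h1⟩ := adj_apply_left h1
  have ad1 : adj n 0 ⟨1, h1⟩ = ⟨0, h0⟩ := adj_apply_right h1
  have E1 : E ⟨1, h1⟩ = a 0 * e * a 0 := by rw [← cA 0 h1, ← hE0, cE, ad0]
  have O1 : O ⟨1, h1⟩ = a 0 * o * a 0 := by rw [← cA 0 h1, ← hO0, cO, ad0]
  have Q10 : Q (⟨1, h1⟩, ⟨0, h0⟩) = q := by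
    have : cj g (adj n 0) q = Q (⟨1, h1⟩, ⟨0, h0⟩) := by rw [← hQ0, cQ, ad0, ad1]
    rw [← this, cA 0 h1, H.aq, H.qa]
  have E_idem : ∀ i, E i * E i = E i := fun i => by
    obtain ⟨j, hj⟩ := exists_ne i
    obtain ⟨σ, rfl, rfl⟩ := exists_perm2 hn i j hj.symm
    simp only [← cE, ← map_mul, hE0, H.ee]
  have O_idem : ∀ i, O i * O i = O i := fun i => by
    obtain ⟨j, hj⟩ := exists_ne i
    obtain ⟨σ, rfl, rfl⟩ := exists_perm2 hn i j hj.symm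
    simp only [← cO, ← map_mul, hO0, H.oo]
  have EOE : ∀ i, E i * O i * E i = E i := fun i => by
    obtain ⟨j, hj⟩ := exists_ne i
    obtain ⟨σ, rfl, rfl⟩ := exists_perm2 hn i j hj.symm
    simp only [← cO, ← cE, ← map_mul, hO0, hE0, H.eoe]
  have OEO : ∀ i, O i * E i * O i = O i := fun i => by
    obtain ⟨j, hj⟩ := exists_ne i
    obtain ⟨σ, rfl, rfl⟩ := exists_perm2 hn i j hj.symm
    simp only [← cO, ← cE, ← map_mul, hO0, hE0, H.oeo]
  have E_comm : ∀ i j, i ≠ j → E i * E j = E j * E i := fun i j hij => by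
    obtain ⟨σ, rfl, rfl⟩ := exists_perm2 hn i j hij
    simp only [← cE, ← map_mul, hE0, E1]
    have := H.eaea
    simp only [mul_assoc] at this ⊢
    rw [this]
  have E_swap : ∀ i j, i ≠ j → E i * E j * g (Equiv.swap i j) = E i * E j := fun i j hij => by
    obtain ⟨σ, rfl, rfl⟩ := exists_perm2 hn i j hij
    simp only [← cE, ← cS, ← map_mul, hE0, E1, sw01]
    have := H.eaea'
    simp only [mul_assoc] at this ⊢
    rw [a00, mul_one, this]
  have EO_comm : ∀ i j, i ≠ j → E i * O j = O j * E i := fun i j hij => by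
    obtain ⟨σ, rfl, rfl⟩ := exists_perm2 hn i j hij
    simp only [← cE, ← cO, ← map_mul, hE0, O1]
    have := H.e_o
    simp only [mul_assoc] at this ⊢
    rw [this]
  have O_comm : ∀ i j, O i * O j = O j * O i := fun i j => by
    rcases eq_or_ne i j with rfl | hij
    · rfl
    obtain ⟨σ, rfl, rfl⟩ := exists_perm2 hn i j hij
    simp only [← cO, ← map_mul, hO0, O1]
    have := H.oaoa
    simp only [mul_assoc] at this ⊢
    rw [this]
  have OO_OQ : ∀ i j, i ≠ j → O i * O j = O i * Q (i, j) := fun i j hij => by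
    obtain ⟨σ, rfl, rfl⟩ := exists_perm2 hn i j hij
    simp only [← cO, ← cQ, ← map_mul, hO0, hQ0, O1]
    have h2 := H.oaoa
    have h3 := H.aoao
    have h4 := H.oao
    simp only [mul_assoc] at h2 h3 h4 ⊢
    rw [h2, h3, h4]
  have OQ_comm2 : ∀ i j, i ≠ j → O i * Q (i, j) = Q (i, j) * O i := fun i j hij => by
    obtain ⟨σ, rfl, rfl⟩ := exists_perm2 hn i j hij
    simp only [← cO, ← cQ, ← map_mul, hO0, hQ0, H.oq]
  have Q_self : ∀ i, Q (i, i) = 1 := fun i => hQ1 _ (fun σ h => by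
    obtain ⟨h2, h3⟩ := Prod.ext_iff.mp h
    have := σ.injective (h2.trans h3.symm)
    simp at this)
  have Q_symm : ∀ i j, Q (i, j) = Q (j, i) := fun i j => by
    rcases eq_or_ne i j with rfl | hij
    · rfl
    obtain ⟨σ, rfl, rfl⟩ := exists_perm2 hn i j hij
    simp only [← cQ, hQ0, Q10]
  have Q_idem : ∀ i j, Q (i, j) * Q (i, j) = Q (i, j) := fun i j => by
    rcases eq_or_ne i j with rfl | hij
    · simp [Q_self]
    obtain ⟨σ, rfl, rfl⟩ := exists_perm2 hn i j hij
    simp only [← cQ, ← map_mul, hQ0, H.qq]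
  have Q_swap : ∀ i j, Q (i, j) * g (Equiv.swap i j) = Q (i, j) := fun i j => by
    rcases eq_or_ne i j with rfl | hij
    · simp [Equiv.swap_self, ← Equiv.Perm.one_def]
    obtain ⟨σ, rfl, rfl⟩ := exists_perm2 hn i j hij
    simp only [← cQ, ← cS, ← map_mul, hQ0, sw01, H.qa]
  have QEQ : ∀ i j, i ≠ j → Q (i, j) * E i * Q (i, j) = Q (i, j) := fun i j hij => by
    obtain ⟨σ, rfl, rfl⟩ := exists_perm2 hn i j hij
    simp only [← cQ, ← cE, ← map_mul, hQ0, hE0, H.qeq]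
  have EQE : ∀ i j, i ≠ j → E i * Q (i, j) * E i = E i := fun i j hij => by
    obtain ⟨σ, rfl, rfl⟩ := exists_perm2 hn i j hij
    simp only [← cQ, ← cE, ← map_mul, hQ0, hE0, H.eqe]
  -- relations involving three or four points
  have ad10 : adj n 1 ⟨0, h0⟩ = ⟨0, h0⟩ := adj_apply_of_ne _ (by simp) (by simp)
  have E2 : ∀ h2 : 2 < n, E ⟨2, h2⟩ = a 1 * (a 0 * e * a 0) * a 1 := fun h2 => by
    rw [← E1, ← cA 1 h2, cE, adj_apply_left (i := 1) h2]
  have O2 : ∀ h2 : 2 < n, O ⟨2, h2⟩ = a 1 * (a 0 * o * a 0) * a 1 := fun h2 => by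
    rw [← O1, ← cA 1 h2, cO, adj_apply_left (i := 1) h2]
  have Q02 : ∀ h2 : 2 < n, Q (⟨0, h0⟩, ⟨2, h2⟩) = a 1 * q * a 1 := fun h2 => by
    rw [← hQ0, ← cA 1 h2, cQ, adj_apply_left (i := 1) h2, ad10]
  have QE_comm : ∀ i j k, i ≠ j → i ≠ k → j ≠ k → E k * Q (i, j) = Q (i, j) * E k := by
    intro i j k hij hik hjk
    obtain ⟨h3, σ, rfl, rfl, rfl⟩ := exists_perm3 i j k hij hik hjk
    simp only [← cQ, ← cE, ← map_mul, hQ0, E2 h3]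
    have := H.q_e (by omega)
    simp only [mul_assoc] at this ⊢
    rw [this]
  have QO_comm : ∀ i j k, i ≠ j → i ≠ k → j ≠ k → O k * Q (i, j) = Q (i, j) * O k := by
    intro i j k hij hik hjk
    obtain ⟨h3, σ, rfl, rfl, rfl⟩ := exists_perm3 i j k hij hik hjk
    simp only [← cQ, ← cO, ← map_mul, hQ0, O2 h3]
    have := H.q_o (by omega)
    simp only [mul_assoc] at this ⊢
    rw [this]
  have QQ_comm3 : ∀ i j k, i ≠ j → i ≠ k → j ≠ k →
      Q (i, j) * Q (i, k) = Q (i, k) * Q (i, j) := by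
    intro i j k hij hik hjk
    obtain ⟨h3, σ, rfl, rfl, rfl⟩ := exists_perm3 i j k hij hik hjk
    simp only [← cQ, ← map_mul, hQ0, Q02 h3]
    have := H.qaqa (by omega)
    simp only [mul_assoc] at this ⊢
    rw [this]
  have QQ_comm4 : ∀ i j k l, i ≠ j → i ≠ k → j ≠ k → i ≠ l → j ≠ l → k ≠ l →
      Q (i, j) * Q (k, l) = Q (k, l) * Q (i, j) := by
    intro i j k l hij hik hjk hil hjl hkl
    obtain ⟨h4, σ, rfl, rfl, rfl, rfl⟩ := exists_perm4 i j k l hij hik hjk hil hjl hkl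
    have h2 : 2 < n := by omega
    have h3 : 3 < n := by omega
    have hw : Q (⟨2, h2⟩, ⟨3, h3⟩) =
        (a 1 * a 0 * a 2 * a 1) * q * (a 1 * a 0 * a 2 * a 1) := by
      have e1 : a 0 * a 2 = a 2 * a 0 := H.cox.comm 0 2 (by omega) (by omega)
      have e2 : (a 1 * a 0 * a 2 * a 1) * q * (a 1 * a 0 * a 2 * a 1) =
          a 1 * (a 0 * (a 2 * (a 1 * q * a 1) * a 2) * a 0) * a 1 := by
        rw [mul_assoc (a 1) (a 0) (a 2)]
        conv_lhs => rw [e1]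
        conv_lhs => enter [1, 1, 1, 2]; rw [← e1]
        simp only [mul_assoc]
      rw [e2, ← cA 1 h2, ← cA 2 h3, ← cA 0 h1, ← cA 1 h2, ← hQ0]
      simp only [cQ]
      congr 2 <;> ext1 <;> simp only [adj_val h1, adj_val (show 1 + 1 < n from h2),
        adj_val (show 2 + 1 < n from h3)] <;> rfl
    have hww : (a 1 * a 0 * a 2 * a 1) * (a 1 * a 0 * a 2 * a 1) = 1 := by
      have e1 : a 0 * a 2 = a 2 * a 0 := H.cox.comm 0 2 (by omega) (by omega)
      have a11 := H.cox.sq 1 (by omega)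
      have a22 := H.cox.sq 2 (by omega)
      calc (a 1 * a 0 * a 2 * a 1) * (a 1 * a 0 * a 2 * a 1)
          = a 1 * (a 0 * a 2) * (a 1 * a 1) * (a 0 * a 2) * a 1 := by simp only [mul_assoc]
        _ = a 1 * (a 0 * (a 2 * a 2) * a 0) * a 1 := by
          rw [a11, mul_one]
          nth_rewrite 2 [e1]
          simp only [mul_assoc]
        _ = 1 := by rw [a22, mul_one, a00, mul_one, a11]
    have h5 := H.qwqw (by omega)
    set w := a 1 * a 0 * a 2 * a 1
    simp only [← cQ, ← map_mul, hQ0, hw]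
    simp only [← mul_assoc]
    rw [h5]
  have Q_comm : ∀ i j k l, Q (i, j) * Q (k, l) = Q (k, l) * Q (i, j) := by
    intro i j k l
    rcases eq_or_ne i j with rfl | hij
    · simp [Q_self]
    rcases eq_or_ne k l with rfl | hkl
    · simp [Q_self]
    rcases eq_or_ne i k with rfl | hik
    · rcases eq_or_ne j l with rfl | hjl
      · rfl
      · exact QQ_comm3 _ _ _ hij hkl hjl
    rcases eq_or_ne j k with rfl | hjk
    · rcases eq_or_ne i l with rfl | hil
      · rw [Q_symm]
      · rw [Q_symm i j]; exact QQ_comm3 _ _ _ hij.symm hkl hil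
    rcases eq_or_ne i l with rfl | hil
    · rw [Q_symm k i]; exact QQ_comm3 _ _ _ hij hik hjk
    rcases eq_or_ne j l with rfl | hjl
    · rw [Q_symm k j, Q_symm i j]; exact QQ_comm3 _ _ _ hij.symm hjk hik
    exact QQ_comm4 _ _ _ _ hij hik hjk hil hjl hkl
  have OQ_comm : ∀ i j k, O k * Q (i, j) = Q (i, j) * O k := by
    intro i j k
    rcases eq_or_ne i j with rfl | hij
    · simp [Q_self]
    rcases eq_or_ne i k with rfl | hik
    · exact OQ_comm2 _ _ hij
    rcases eq_or_ne j k with rfl | hjk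
    · rw [Q_symm]; exact OQ_comm2 _ _ hij.symm
    exact QO_comm _ _ _ hij hik hjk
  have QQ_trans : ∀ i j k, i ≠ j → i ≠ k → j ≠ k → Q (i, j) * Q (j, k) = Q (i, j) * Q (i, k) := by
    intro i j k hij hik hjk
    have h2 := hQ (Equiv.swap i j) (j, k)
    simp only [Prod.smul_mk, Equiv.Perm.smul_def, Equiv.swap_apply_right,
      Equiv.swap_apply_of_ne_of_ne hik.symm hjk.symm] at h2
    rw [← Q_swap i j, mul_assoc, h2, ← mul_assoc, Q_swap, Q_comm, mul_assoc, Q_swap]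
  have QO_trans : ∀ i j, i ≠ j → Q (i, j) * O j = Q (i, j) * O i := by
    intro i j hij
    rw [← OQ_comm, ← OQ_comm, ← OO_OQ i j hij, O_comm, OO_OQ j i hij.symm, Q_symm]
  let t : Option (Fin n) → Option (Fin n) → M := fun x y =>
    match x, y with
    | some i, some j => Q (i, j)
    | some i, none => O i
    | none, some i => O i
    | none, none => 1
  refine ⟨g, E, t, ?_, hg, hE0, hQ0, hO0⟩
  refine
    { g_e := hE
      g_t := ?_
      e_idem := E_idem
      e_comm := ?_
      e_swap := E_swap
      t_self := ?_
      t_symm := ?_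
      t_idem := ?_
      t_comm := ?_
      t_trans := ?_
      t_swap := Q_swap
      e_t := ?_
      ete := ?_
      tet := ?_ }
  · rintro σ (_ | i) (_ | j)
    · simp [t]
    · exact hO σ j
    · exact hO σ i
    · exact hQ σ (i, j)
  · intro i j
    rcases eq_or_ne i j with rfl | hij
    · rfl
    · exact E_comm i j hij
  · rintro (_ | i)
    · rfl
    · exact Q_self i
  · rintro (_ | i) (_ | j)
    · rfl
    · rfl
    · rfl
    · exact Q_symm i j
  · rintro (_ | i) (_ | j)
    · exact one_mul 1
    · exact O_idem j
    · exact O_idem i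
    · exact Q_idem i j
  · rintro (_ | i) (_ | j) (_ | k) (_ | l) <;>
      first
      | exact (one_mul _).trans (mul_one _).symm
      | exact (mul_one _).trans (one_mul _).symm
      | exact O_comm _ _
      | exact OQ_comm _ _ _
      | exact (OQ_comm _ _ _).symm
      | exact Q_comm _ _ _ _
  · have t_self : ∀ x, t x x = 1 := by
      rintro (_ | i)
      · rfl
      · exact Q_self i
    have t_idem : ∀ x y, t x y * t x y = t x y := by
      rintro (_ | i) (_ | j)
      · exact one_mul 1
      · exact O_idem j
      · exact O_idem i
      · exact Q_idem i j
    have t_symm : ∀ x y, t x y = t y x := by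
      rintro (_ | i) (_ | j)
      · rfl
      · rfl
      · rfl
      · exact Q_symm i j
    intro x y z
    rcases eq_or_ne x y with rfl | hxy
    · rfl
    rcases eq_or_ne x z with rfl | hxz
    · rw [t_symm y x, t_self, t_idem, mul_one]
    rcases eq_or_ne y z with rfl | hyz
    · rw [t_self, t_idem, mul_one]
    rcases x with _ | i <;> rcases y with _ | j <;> rcases z with _ | k <;>
      simp only [ne_eq, not_true_eq_false, Option.some.injEq] at hxy hxz hyz
    · exact (OO_OQ j k hyz).symm
    · exact OO_OQ i k hxz
    · exact QO_trans i j hxy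
    · exact QQ_trans i j k hxy hxz hyz
  · rintro i (_ | j) (_ | k) hj hk
    · exact (mul_one _).trans (one_mul _).symm
    · exact EO_comm i k (fun h => hk (by rw [h]))
    · exact EO_comm i j (fun h => hj (by rw [h]))
    · change E i * Q (j, k) = Q (j, k) * E i
      rcases eq_or_ne j k with rfl | hjk
      · simp [Q_self]
      · exact QE_comm j k i hjk (fun h => hj (by rw [h])) (fun h => hk (by rw [h]))
  · rintro i (_ | j) hj
    · exact EOE i
    · exact EQE i j (fun h => hj (by rw [h]))
  · rintro i (_ | j) hj
    · exact OEO i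
    · exact QEQ i j (fun h => hj (by rw [h]))

end Families

/-! ### Products of commuting idempotents -/

section FProd

variable {M : Type*} [Monoid M] {ι : Type*} [Fintype ι]

open Classical in
/-- The product of the elements `f i` with `S i`, in some order. It is only used for families of
commuting idempotents, where the order is irrelevant. -/
noncomputable def fprod (f : ι → M) (S : ι → Prop) : M :=
  ((Finset.univ.filter S).toList.map f).prod

theorem absorb_fprod {f : ι → M} {S : ι → Prop} {m : M} (h : ∀ i, S i → m * f i = m) :
    m * fprod f S = m := by
  classical
  have : ∀ l : List ι, (∀ i ∈ l, m * f i = m) → m * (l.map f).prod = m := by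
    intro l
    induction l with
    | nil => simp
    | cons i l ih =>
      intro hl
      rw [List.map_cons, List.prod_cons, ← mul_assoc, hl i (by simp),
        ih (fun j hj => hl j (by simp [hj]))]
  exact this _ (fun i hi => h i (by simpa using hi))

theorem commute_fprod {f : ι → M} {S : ι → Prop} {m : M} (h : ∀ i, S i → Commute m (f i)) :
    Commute m (fprod f S) := by
  classical
  refine Commute.list_prod_right _ _ (fun x hx => ?_)
  obtain ⟨i, hi, rfl⟩ := List.mem_map.mp hx
  exact h i (by simpa using hi)

theorem map_fprod {M' : Type*} [Monoid M'] (c : M →* M') (f : ι → M) (S : ι → Prop) :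
    c (fprod f S) = fprod (fun i => c (f i)) S := by
  simp only [fprod, map_list_prod, List.map_map]
  rfl

theorem fprod_mul_of_mem {f : ι → M} {S : ι → Prop} (hc : ∀ i j, Commute (f i) (f j))
    (hi : ∀ i, f i * f i = f i) (i : ι) (h : S i) : fprod f S * f i = fprod f S := by
  classical
  have : ∀ l : List ι, i ∈ l → (l.map f).prod * f i = (l.map f).prod := by
    intro l
    induction l with
    | nil => simp
    | cons j l ih =>
      intro hl
      rw [List.map_cons, List.prod_cons]
      rcases List.mem_cons.mp hl with rfl | h1
      · have : Commute (f i) (l.map f).prod := Commute.list_prod_right _ _ (fun x hx => by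
          obtain ⟨k, -, rfl⟩ := List.mem_map.mp hx
          exact hc i k)
        rw [mul_assoc, ← this.eq, ← mul_assoc, hi]
      · rw [mul_assoc, ih h1]
  exact this _ (by simpa using h)

/-- Characterisation of the product of a family by mutual absorption. -/
theorem eq_fprod {f : ι → M} {S : ι → Prop} {z : M} (h1 : ∀ i, S i → z * f i = z)
    (h2 : fprod f S * z = fprod f S) (h3 : ∀ i, S i → Commute z (f i)) : z = fprod f S := by
  rw [← h2, ← (commute_fprod h3).eq, absorb_fprod h1]

end FProd

/-! ### Normal forms -/

section NormalForms

variable {M : Type*} [Monoid M] {n : ℕ} {g : Equiv.Perm (Fin n) →* M} {e : Fin n → M}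
  {t : Option (Fin n) → Option (Fin n) → M}

/-- The product of all `t x y` with `x`, `y` related by `K`. -/
noncomputable def tProd (t : Option (Fin n) → Option (Fin n) → M)
    (K : Option (Fin n) → Option (Fin n) → Prop) : M :=
  fprod (fun p : Option (Fin n) × Option (Fin n) => t p.1 p.2) (fun p => K p.1 p.2)

/-- The product of all `e i` with `i ∉ D`. -/
noncomputable def eProd (e : Fin n → M) (D : Fin n → Prop) : M := fprod e (fun i => ¬ D i)

/-- The equivalence relation generated by an equivalence relation `K` and the pair `(x, y)`. -/
def joinRel {X : Type*} (K : X → X → Prop) (x y : X) (a b : X) : Prop :=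
  K a b ∨ (K a x ∧ K y b) ∨ (K a y ∧ K x b)

theorem joinRel_equiv {X : Type*} {K : X → X → Prop} (hK : Equivalence K) (x y : X) :
    Equivalence (joinRel K x y) := by
  have s : ∀ {a b}, K a b → K b a := hK.symm
  have r := hK.refl
  have t : ∀ {a b c}, K a b → K b c → K a c := hK.trans
  refine ⟨fun a => Or.inl (r a), fun {a b} h => ?_, fun {a b c} h h' => ?_⟩
  · rcases h with h | ⟨h1, h2⟩ | ⟨h1, h2⟩
    · exact Or.inl (s h)
    · exact Or.inr (Or.inr ⟨s h2, s h1⟩)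
    · exact Or.inr (Or.inl ⟨s h2, s h1⟩)
  · rcases h with h | ⟨h1, h2⟩ | ⟨h1, h2⟩ <;> rcases h' with h' | ⟨h3, h4⟩ | ⟨h3, h4⟩
    · exact Or.inl (t h h')
    · exact Or.inr (Or.inl ⟨t h h3, h4⟩)
    · exact Or.inr (Or.inr ⟨t h h3, h4⟩)
    · exact Or.inr (Or.inl ⟨h1, t h2 h'⟩)
    · exact Or.inr (Or.inl ⟨h1, h4⟩)
    · exact Or.inl (t h1 h4)
    · exact Or.inr (Or.inr ⟨h1, t h2 h'⟩)
    · exact Or.inl (t h1 h4)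
    · exact Or.inr (Or.inr ⟨h1, h4⟩)

namespace Sys

theorem tProd_mul (H : Sys g e t) {K : Option (Fin n) → Option (Fin n) → Prop}
    {x y : Option (Fin n)} (h : K x y) : tProd t K * t x y = tProd t K :=
  fprod_mul_of_mem (f := fun p : Option (Fin n) × Option (Fin n) => t p.1 p.2)
    (S := fun p => K p.1 p.2)
    (fun _ _ => H.t_comm _ _ _ _) (fun _ => H.t_idem _ _) (x, y) h

theorem mul_tProd (H : Sys g e t) {K : Option (Fin n) → Option (Fin n) → Prop} {m : M}
    (h : ∀ x y, x ≠ y → K x y → m * t x y = m) : m * tProd t K = m :=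
  absorb_fprod (fun p hp => by
    rcases eq_or_ne p.1 p.2 with h1 | h1
    · rw [h1, H.t_self, mul_one]
    · exact h _ _ h1 hp)

theorem commute_tProd (H : Sys g e t) {K : Option (Fin n) → Option (Fin n) → Prop} {m : M}
    (h : ∀ x y, x ≠ y → K x y → Commute m (t x y)) : Commute m (tProd t K) :=
  commute_fprod (fun p hp => by
    rcases eq_or_ne p.1 p.2 with h1 | h1
    · rw [h1, H.t_self]; exact Commute.one_right m
    · exact h _ _ h1 hp)

theorem commute_t_tProd (H : Sys g e t) (K : Option (Fin n) → Option (Fin n) → Prop)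
    (x y : Option (Fin n)) : Commute (t x y) (tProd t K) :=
  H.commute_tProd (fun _ _ _ _ => H.t_comm _ _ _ _)

theorem eq_tProd (_H : Sys g e t) {K : Option (Fin n) → Option (Fin n) → Prop} {z : M}
    (h1 : ∀ x y, K x y → z * t x y = z) (h2 : tProd t K * z = tProd t K)
    (h3 : ∀ x y, Commute z (t x y)) : z = tProd t K :=
  eq_fprod (fun _ hp => h1 _ _ hp) h2 (fun _ _ => h3 _ _)

/-- The pairs absorbed by an element are closed under transitivity. -/
theorem absorb_trans (H : Sys g e t) {m : M} {x y z : Option (Fin n)} (h1 : m * t x y = m)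
    (h2 : m * t y z = m) : m * t x z = m := by
  rw [← h1, mul_assoc, ← H.t_trans, ← mul_assoc, h1, h2]

theorem tProd_mul_t (H : Sys g e t) {K : Option (Fin n) → Option (Fin n) → Prop}
    (hK : Equivalence K) (x y : Option (Fin n)) :
    tProd t K * t x y = tProd t (joinRel K x y) := by
  have hxy : tProd t K * t x y * t x y = tProd t K * t x y := by rw [mul_assoc, H.t_idem]
  have hab : ∀ a b, K a b → tProd t K * t x y * t a b = tProd t K * t x y := fun a b h => by
    rw [mul_assoc, H.t_comm, ← mul_assoc, H.tProd_mul h]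
  refine H.eq_tProd (fun a b h => ?_) ?_ (fun a b => ?_)
  · rcases h with h | ⟨h1, h2⟩ | ⟨h1, h2⟩
    · exact hab a b h
    · exact H.absorb_trans (hab _ _ h1) (H.absorb_trans hxy (hab _ _ h2))
    · exact H.absorb_trans (hab _ _ h1)
        (H.absorb_trans (by rw [H.t_symm y x]; exact hxy) (hab _ _ h2))
  · rw [← mul_assoc, H.mul_tProd (K := K)
        (fun a b _ h => H.tProd_mul (K := joinRel K x y) (Or.inl h)),
      H.tProd_mul (K := joinRel K x y) (Or.inr (Or.inl ⟨hK.refl x, hK.refl y⟩))]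
  · exact (H.commute_t_tProd K a b).symm.mul_left (H.t_comm _ _ _ _)

theorem eProd_mul (H : Sys g e t) {D : Fin n → Prop} {i : Fin n} (h : ¬ D i) :
    eProd e D * e i = eProd e D :=
  fprod_mul_of_mem (f := e) (S := fun i => ¬ D i) (fun _ _ => H.e_comm _ _)
    (fun _ => H.e_idem _) i h

theorem eProd_mul_e (H : Sys g e t) (D : Fin n → Prop) (i : Fin n) :
    eProd e D * e i = eProd e (fun j => D j ∧ j ≠ i) := by
  refine eq_fprod (fun j hj => ?_) ?_ (fun j _ => ?_)
  · by_cases h : D j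
    · obtain rfl : j = i := by by_contra hne; exact hj ⟨h, hne⟩
      rw [mul_assoc, H.e_idem]
    · rw [mul_assoc, H.e_comm, ← mul_assoc, H.eProd_mul h]
  · rw [← mul_assoc]
    have h1 : fprod e (fun j => ¬ (D j ∧ j ≠ i)) * eProd e D =
        fprod e (fun j => ¬ (D j ∧ j ≠ i)) :=
      absorb_fprod (fun j hj => H.eProd_mul (D := fun j => D j ∧ j ≠ i) (fun h => hj h.1))
    rw [h1]
    exact H.eProd_mul (D := fun j => D j ∧ j ≠ i) (fun h => h.2 rfl)
  · exact ((commute_fprod (fun k _ => H.e_comm j k)).symm).mul_left (H.e_comm _ _)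

theorem g_inv (g : Equiv.Perm (Fin n) →* M) (σ : Equiv.Perm (Fin n)) : g σ⁻¹ * g σ = 1 := by
  rw [← map_mul]; simp

theorem of_cj {σ : Equiv.Perm (Fin n)} {x y : M} (h : cj g σ x = y) : g σ * x = y * g σ := by
  rw [← h]
  change _ = g σ * x * g σ⁻¹ * g σ
  rw [mul_assoc _ (g σ⁻¹), g_inv, mul_one]

theorem tProd_mul_g (H : Sys g e t) (K : Option (Fin n) → Option (Fin n) → Prop)
    (σ : Equiv.Perm (Fin n)) :
    tProd t K * g σ = g σ * tProd t (fun a b => K (a.map σ) (b.map σ)) := by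
  have mm : ∀ a : Option (Fin n), (a.map (σ⁻¹ : Equiv.Perm (Fin n))).map σ = a := by
    intro a; cases a <;> simp
  have key : ∀ x y, cj g σ (t (x.map (σ⁻¹ : Equiv.Perm (Fin n)))
      (y.map (σ⁻¹ : Equiv.Perm (Fin n)))) = t x y := fun x y => by
    refine cj_eq ?_
    rw [H.g_t, mm, mm]
  refine (of_cj (H.eq_tProd (fun x y h => ?_) ?_ (fun x y => ?_))).symm
  · rw [← key, ← map_mul, H.tProd_mul]
    simpa only [mm] using h
  · conv_lhs => rw [tProd, tProd, map_fprod]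
    refine absorb_fprod (fun p hp => ?_)
    rw [cj_eq (H.g_t σ p.1 p.2)]
    exact H.tProd_mul (K := K) hp
  · rw [← key]
    exact ((H.commute_t_tProd _ _ _).symm).map (cj g σ)

theorem eProd_mul_g (H : Sys g e t) (D : Fin n → Prop) (σ : Equiv.Perm (Fin n)) :
    eProd e D * g σ = g σ * eProd e (fun i => D (σ i)) := by
  have key : ∀ i, cj g σ (e (σ⁻¹ i)) = e i := fun i => by
    refine cj_eq ?_
    rw [H.g_e]; simp
  refine (of_cj (eq_fprod (fun i h => ?_) ?_ (fun i _ => ?_))).symm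
  · rw [← key, ← map_mul, H.eProd_mul]
    simpa using h
  · conv_lhs => rw [eProd, map_fprod]
    refine absorb_fprod (fun i hi => ?_)
    rw [cj_eq (H.g_e σ i)]
    exact H.eProd_mul (D := D) hi
  · rw [← key]
    exact ((commute_fprod (fun k _ => H.e_comm _ k)).symm).map (cj g σ)

/-- An element absorbing all transpositions of `r`-related points absorbs all permutations
preserving each `r`-class. -/
theorem absorb_perm {m : M} {r : Fin n → Fin n → Prop}
    (h : ∀ i j, i ≠ j → r i j → m * g (Equiv.swap i j) = m) (π : Equiv.Perm (Fin n))
    (hπ : ∀ i, r i (π i)) : m * g π = m := by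
  have hmem : π ∈ Subgroup.closure {f | ∃ i j, i ≠ j ∧ r i j ∧ f = Equiv.swap i j} := by
    rw [mem_closure_isSwap]
    · refine ⟨Set.toFinite _, fun x => ?_⟩
      by_cases hx : x = π x
      · rw [← hx]; exact MulAction.mem_orbit_self x
      · exact ⟨⟨_, Subgroup.subset_closure ⟨x, π x, hx, hπ x, rfl⟩⟩, Equiv.swap_apply_left _ _⟩
    · rintro f ⟨i, j, hij, -, rfl⟩
      exact ⟨i, j, hij, rfl⟩
  clear hπ
  induction hmem using Subgroup.closure_induction'' with
  | mem f hf =>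
    obtain ⟨i, j, hij, hr, rfl⟩ := hf
    exact h i j hij hr
  | inv_mem f hf =>
    obtain ⟨i, j, hij, hr, rfl⟩ := hf
    rw [Equiv.swap_inv]
    exact h i j hij hr
  | one => simp
  | mul x y _ _ hx hy => rw [map_mul, ← mul_assoc, hx, hy]

theorem tProd_absorb_perm (H : Sys g e t) {K : Option (Fin n) → Option (Fin n) → Prop}
    (π : Equiv.Perm (Fin n)) (hπ : ∀ i, K (some i) (some (π i))) :
    tProd t K * g π = tProd t K :=
  absorb_perm (r := fun i j => K (some i) (some j)) (fun i j _ h => by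
    rw [← H.tProd_mul h, mul_assoc, H.t_swap]) π hπ

theorem perm_absorb_tProd (H : Sys g e t) {K : Option (Fin n) → Option (Fin n) → Prop}
    (hK : Equivalence K) (π : Equiv.Perm (Fin n)) (hπ : ∀ i, K (some i) (some (π i))) :
    g π * tProd t K = tProd t K := by
  have h1 : ∀ a : Option (Fin n), K a (a.map π) := by
    rintro (_ | i)
    · exact hK.refl _
    · exact hπ i
  have h2 := H.tProd_mul_g K π
  have h3 : (fun a b : Option (Fin n) => K (a.map π) (b.map π)) = K := by
    funext a b
    exact propext ⟨fun h => hK.trans (h1 a) (hK.trans h (hK.symm (h1 b))),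
      fun h => hK.trans (hK.symm (h1 a)) (hK.trans h (h1 b))⟩
  rw [h3] at h2
  rw [← h2, H.tProd_absorb_perm π hπ]

theorem perm_absorb_eProd (H : Sys g e t) {D : Fin n → Prop}
    (π : Equiv.Perm (Fin n)) (hπ : ∀ i, D i → π i = i) :
    g π * eProd e D = eProd e D := by
  have h0 : ∀ i, ¬ D i → ¬ D (π i) := fun i hi h => by
    have := π.injective (hπ _ h)
    rw [this] at h; exact hi h
  have h1 : (fun i => D (π i)) = D := by
    funext i
    refine propext ⟨fun h => by_contra fun hi => h0 i hi h, fun h => by rwa [hπ i h]⟩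
  have h2 := H.eProd_mul_g D π
  rw [h1] at h2
  rw [← h2]
  refine absorb_perm (r := fun i j => i = j ∨ (¬ D i ∧ ¬ D j)) (fun i j hij h => ?_) π
    (fun i => ?_)
  · obtain ⟨hi, hj⟩ := h.resolve_left hij
    calc eProd e D * g (Equiv.swap i j) = eProd e D * e i * e j * g (Equiv.swap i j) := by
          rw [H.eProd_mul hi, H.eProd_mul hj]
      _ = eProd e D * (e i * e j * g (Equiv.swap i j)) := by simp only [mul_assoc]
      _ = eProd e D * e i * e j := by rw [H.e_swap i j hij, mul_assoc]
      _ = eProd e D := by rw [H.eProd_mul hi, H.eProd_mul hj]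
  · by_cases h : D i
    · exact Or.inl (hπ i h).symm
    · exact Or.inr ⟨h, h0 i h⟩

end Sys

/-- Two partial transversals meeting the same classes of an equivalence relation are matched by
a permutation preserving each class. -/
theorem exists_perm_match {X : Type*} {r : X → X → Prop} (hr : Equivalence r) {A A' : X → Prop}
    (hA : ∀ a b, A a → A b → r a b → a = b) (hA' : ∀ a b, A' a → A' b → r a b → a = b)
    (h1 : ∀ a, A a → ∃ b, A' b ∧ r a b) (h2 : ∀ b, A' b → ∃ a, A a ∧ r b a) :
    ∃ π : Equiv.Perm X, (∀ x, r x (π x)) ∧ ∀ x, A x ↔ A' (π x) := by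
  classical
  let f : X → X := fun x =>
    if h : A x then (h1 x h).choose else if h' : A' x then (h2 x h').choose else x
  have f1 : ∀ x, A x → A' (f x) ∧ r x (f x) := fun x h => by
    have : f x = (h1 x h).choose := dif_pos h
    rw [this]; exact (h1 x h).choose_spec
  have f2 : ∀ x, ¬ A x → A' x → A (f x) ∧ r x (f x) := fun x h h' => by
    have : f x = (h2 x h').choose := by simp only [f, dif_neg h, dif_pos h']
    rw [this]; exact (h2 x h').choose_spec
  have f3 : ∀ x, ¬ A x → ¬ A' x → f x = x := fun x h h' => by
    simp only [f, dif_neg h, dif_neg h']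
  have fr : ∀ x, r x (f x) := fun x => by
    by_cases h : A x
    · exact (f1 x h).2
    by_cases h' : A' x
    · exact (f2 x h h').2
    · rw [f3 x h h']; exact hr.refl x
  have ff : ∀ x, f (f x) = x := fun x => by
    have hrx : r (f (f x)) x := hr.symm (hr.trans (fr x) (fr _))
    by_cases h : A x
    · obtain ⟨h3, h4⟩ := f1 x h
      by_cases h5 : A (f x)
      · have h6 := hA _ _ h h5 h4
        have := hA' _ _ (f1 _ h5).1 (h3) (hr.trans hrx h4)
        rw [this, ← h6]
      · exact hA _ _ (f2 _ h5 h3).1 h hrx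
    by_cases h' : A' x
    · exact hA' _ _ (f1 _ (f2 x h h').1).1 h' hrx
    · rw [f3 x h h', f3 x h h']
  have fA : ∀ x, A' x → A (f x) := fun x h' => by
    by_cases h : A x
    · have : x = f x := hA' _ _ h' (f1 x h).1 (fr x)
      rwa [← this]
    · exact (f2 x h h').1
  exact ⟨⟨f, f, ff, ff⟩, fr, fun x => ⟨fun h => (f1 x h).1, fun h => by
    have h' : A (f (f x)) := fA (f x) h
    rw [ff] at h'
    exact h'⟩⟩

/-- The element attached to the data of upper and lower kernels `K`, `L` and of a partial
permutation, given as the restriction to `D` of a permutation `σ` (joining the lower point `i` to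
the upper point `σ i`). -/
noncomputable def nf (g : Equiv.Perm (Fin n) →* M) (e : Fin n → M)
    (t : Option (Fin n) → Option (Fin n) → M) (K L : Option (Fin n) → Option (Fin n) → Prop)
    (σ : Equiv.Perm (Fin n)) (D : Fin n → Prop) : M :=
  tProd t K * g σ * eProd e D * tProd t L

/-- The data of a normal form are reduced if the partial permutation joins distinct classes, and
none of them is the class of the extra point. -/
structure Red (K L : Option (Fin n) → Option (Fin n) → Prop) (σ : Equiv.Perm (Fin n))
    (D : Fin n → Prop) : Prop where
  Keq : Equivalence K
  Leq : Equivalence L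
  Kinf : ∀ i, D i → ¬ K (some (σ i)) none
  Linf : ∀ i, D i → ¬ L (some i) none
  Kinj : ∀ i j, D i → D j → K (some (σ i)) (some (σ j)) → i = j
  Linj : ∀ i j, D i → D j → L (some i) (some j) → i = j

namespace Sys

/-- Reduced data that join the same classes define the same element: the chosen
representatives of the classes are immaterial. -/
theorem nf_unique (H : Sys g e t) {K L : Option (Fin n) → Option (Fin n) → Prop}
    {σ σ' : Equiv.Perm (Fin n)} {D D' : Fin n → Prop} (h : Red K L σ D) (h' : Red K L σ' D')
    (h1 : ∀ i, D i → ∃ i', D' i' ∧ L (some i) (some i') ∧ K (some (σ i)) (some (σ' i')))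
    (h2 : ∀ i, D' i → ∃ i', D i' ∧ L (some i) (some i') ∧ K (some (σ' i)) (some (σ i'))) :
    nf g e t K L σ D = nf g e t K L σ' D' := by
  have eqv : ∀ {K : Option (Fin n) → Option (Fin n) → Prop}, Equivalence K →
      Equivalence (fun i j => K (some i) (some j)) := fun hK =>
    ⟨fun _ => hK.refl _, fun h => hK.symm h, fun h h' => hK.trans h h'⟩
  obtain ⟨ρ, hρ, hρD⟩ := exists_perm_match (eqv h.Leq) h.Linj h'.Linj
    (fun i hi => (h1 i hi).imp fun _ h => ⟨h.1, h.2.1⟩)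
    (fun i hi => (h2 i hi).imp fun _ h => ⟨h.1, h.2.1⟩)
  obtain ⟨π, hπ, hπD⟩ := exists_perm_match (A := fun x => D (σ⁻¹ x)) (A' := fun x => D' (σ'⁻¹ x))
    (eqv h.Keq)
    (fun i j hi hj hij => σ⁻¹.injective (h.Kinj _ _ hi hj (by simpa using hij)))
    (fun i j hi hj hij => σ'⁻¹.injective (h'.Kinj _ _ hi hj (by simpa using hij)))
    (fun x hx => by
      obtain ⟨i', hi', -, hk⟩ := h1 _ hx
      exact ⟨σ' i', by simpa using hi', by simpa using hk⟩)
    (fun x hx => by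
      obtain ⟨i', hi', -, hk⟩ := h2 _ hx
      exact ⟨σ i', by simpa using hi', by simpa using hk⟩)
  have hagree : ∀ i, D' i → (σ'⁻¹ * (π * σ * ρ⁻¹)) i = i := by
    intro i hi
    have hDi : D (ρ⁻¹ i) := (hρD _).mpr (by simpa using hi)
    have hL : L (some (ρ⁻¹ i)) (some i) := by simpa using hρ (ρ⁻¹ i)
    have hk := (hπD (σ (ρ⁻¹ i))).mp (by simpa using hDi)
    have hKk := hπ (σ (ρ⁻¹ i))
    obtain ⟨i', hi', hL', hK'⟩ := h1 _ hDi
    have e1 : i' = i := h'.Linj _ _ hi' hi (h.Leq.trans (h.Leq.symm hL') hL)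
    subst e1
    exact h'.Kinj _ _ hk hi (by
      simpa using h.Keq.trans (h.Keq.symm hKk) hK')
  have hDρ : (fun i => D (ρ⁻¹ i)) = D' := by
    funext i; exact propext ((hρD _).trans (by simp))
  have hρ' : ∀ i, L (some i) (some (ρ⁻¹ i)) := fun i => by
    simpa using h.Leq.symm (hρ (ρ⁻¹ i))
  calc nf g e t K L σ D
      = tProd t K * g π * g σ * eProd e D * (g ρ⁻¹ * tProd t L) := by
        rw [H.tProd_absorb_perm π hπ, H.perm_absorb_tProd h.Leq _ hρ', nf]
    _ = tProd t K * g π * g σ * (eProd e D * g ρ⁻¹) * tProd t L := by simp only [mul_assoc]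
    _ = tProd t K * (g π * g σ * g ρ⁻¹) * eProd e D' * tProd t L := by
        rw [H.eProd_mul_g, hDρ]; simp only [mul_assoc]
    _ = tProd t K * g (σ' * (σ'⁻¹ * (π * σ * ρ⁻¹))) * eProd e D' * tProd t L := by
        rw [mul_inv_cancel_left, map_mul, map_mul]
    _ = tProd t K * g σ' * (g (σ'⁻¹ * (π * σ * ρ⁻¹)) * eProd e D') * tProd t L := by
        rw [map_mul g σ']; simp only [mul_assoc]
    _ = nf g e t K L σ' D' := by rw [H.perm_absorb_eProd _ hagree, nf]

/-- The elements with a reduced normal form. -/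
def HasNF (g : Equiv.Perm (Fin n) →* M) (e : Fin n → M)
    (t : Option (Fin n) → Option (Fin n) → M) (m : M) : Prop :=
  ∃ K L σ D, Red K L σ D ∧ m = nf g e t K L σ D

theorem hasNF_one (H : Sys g e t) : HasNF g e t 1 := by
  refine ⟨Eq, Eq, 1, fun _ => True, ⟨eq_equivalence, eq_equivalence, by simp, by simp, by simp,
    by simp⟩, ?_⟩
  have h1 : tProd t Eq = 1 := by
    rw [← one_mul (tProd t Eq)]
    exact H.mul_tProd (fun x y h h' => absurd h' h)
  have h2 : eProd e (fun _ => True) = 1 := by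
    rw [← one_mul (eProd e _)]
    exact absorb_fprod (fun i hi => absurd trivial hi)
  simp [nf, h1, h2]

theorem hasNF_mul_g (H : Sys g e t) {m : M} (hm : HasNF g e t m) (τ : Equiv.Perm (Fin n)) :
    HasNF g e t (m * g τ) := by
  obtain ⟨K, L, σ, D, h, rfl⟩ := hm
  refine ⟨K, fun a b => L (a.map τ) (b.map τ), σ * τ, fun i => D (τ i), ?_, ?_⟩
  · refine ⟨h.Keq, ⟨fun _ => h.Leq.refl _, fun h' => h.Leq.symm h',
      fun h1 h2 => h.Leq.trans h1 h2⟩, fun i hi => h.Kinf _ hi, fun i hi => h.Linf _ hi,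
      fun i j hi hj hij => τ.injective (h.Kinj _ _ hi hj hij),
      fun i j hi hj hij => τ.injective (h.Linj _ _ hi hj hij)⟩
  · calc nf g e t K L σ D * g τ
        = tProd t K * g σ * (eProd e D * (tProd t L * g τ)) := by
          simp only [nf, mul_assoc]
      _ = tProd t K * g σ * (eProd e D * g τ) *
            tProd t (fun a b => L (a.map τ) (b.map τ)) := by
          rw [H.tProd_mul_g L τ]; simp only [mul_assoc]
      _ = _ := by rw [H.eProd_mul_g, nf, map_mul]; simp only [mul_assoc]

theorem hasNF_mul_e (H : Sys g e t) {m : M} (hm : HasNF g e t m) (i : Fin n) :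
    HasNF g e t (m * e i) := by
  obtain ⟨K, L, σ, D, h, rfl⟩ := hm
  by_cases hi : ∃ y, y ≠ some i ∧ L (some i) y
  · -- `i` shares its lower class with another point `y`; the class may be represented by `y`
    obtain ⟨y, hy, hLy⟩ := hi
    suffices hs : ∀ (σ : Equiv.Perm (Fin n)) (D : Fin n → Prop), Red K L σ D → ¬ D i →
        HasNF g e t (nf g e t K L σ D * e i) by
      by_cases hDi : D i
      · rcases y with _ | j
        · exact absurd hLy (h.Linf i hDi)
        have hij : i ≠ j := fun hh => hy (by rw [hh])
        have hDj : ¬ D j := fun hDj => hij (h.Linj i j hDi hDj hLy)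
        have hτ : ∀ k, L (some k) (some (Equiv.swap i j k)) := by
          intro k
          rcases eq_or_ne k i with rfl | hki
          · rwa [Equiv.swap_apply_left]
          rcases eq_or_ne k j with rfl | hkj
          · rw [Equiv.swap_apply_right]; exact h.Leq.symm hLy
          · rw [Equiv.swap_apply_of_ne_of_ne hki hkj]; exact h.Leq.refl _
        have e1 : nf g e t K L σ D =
            nf g e t K L (σ * Equiv.swap i j) (fun k => D (Equiv.swap i j k)) := by
          calc nf g e t K L σ D
              = tProd t K * g σ * eProd e D * (g (Equiv.swap i j) * tProd t L) := by
                rw [H.perm_absorb_tProd h.Leq _ hτ, nf]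
            _ = tProd t K * g σ * (eProd e D * g (Equiv.swap i j)) * tProd t L := by
                simp only [mul_assoc]
            _ = _ := by rw [H.eProd_mul_g, nf, map_mul]; simp only [mul_assoc]
        rw [e1]
        refine hs _ _ ⟨h.Keq, h.Leq, fun k hk => h.Kinf _ hk, fun k hk hL => ?_,
          fun k l hk hl hkl => (Equiv.swap i j).injective (h.Kinj _ _ hk hl hkl),
          fun k l hk hl hkl => (Equiv.swap i j).injective (h.Linj _ _ hk hl ?_)⟩ ?_
        · exact h.Linf _ hk (h.Leq.trans (h.Leq.symm (hτ k)) hL)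
        · exact h.Leq.trans (h.Leq.symm (hτ k)) (h.Leq.trans hkl (hτ l))
        · rwa [Equiv.swap_apply_left]
      · exact hs σ D h hDi
    intro σ D h hDi
    -- `L'` is obtained from `L` by isolating `i`
    set L' : Option (Fin n) → Option (Fin n) → Prop :=
      fun a b => a = b ∨ (a ≠ some i ∧ b ≠ some i ∧ L a b) with hL'
    have L'eq : Equivalence L' := by
      refine ⟨fun a => Or.inl rfl, fun {a b} hab => ?_, fun {a b c} hab hbc => ?_⟩
      · rcases hab with rfl | ⟨h1, h2, h3⟩
        · exact Or.inl rfl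
        · exact Or.inr ⟨h2, h1, h.Leq.symm h3⟩
      · rcases hab with rfl | ⟨h1, h2, h3⟩
        · exact hbc
        rcases hbc with rfl | ⟨h4, h5, h6⟩
        · exact Or.inr ⟨h1, h2, h3⟩
        · exact Or.inr ⟨h1, h5, h.Leq.trans h3 h6⟩
    have L'L : ∀ a b, L' a b → L a b := by
      rintro a b (rfl | ⟨-, -, h3⟩)
      · exact h.Leq.refl _
      · exact h3
    have hj : joinRel L' (some i) y = L := by
      funext a b
      refine propext ⟨?_, fun hab => ?_⟩
      · rintro (h1 | ⟨h1, h2⟩ | ⟨h1, h2⟩)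
        · exact L'L _ _ h1
        · exact h.Leq.trans (L'L _ _ h1) (h.Leq.trans hLy (L'L _ _ h2))
        · exact h.Leq.trans (L'L _ _ h1) (h.Leq.trans (h.Leq.symm hLy) (L'L _ _ h2))
      · by_cases ha : a = some i
        · subst ha
          by_cases hb : b = some i
          · exact Or.inl (Or.inl hb.symm)
          · exact Or.inr (Or.inl ⟨Or.inl rfl,
              Or.inr ⟨hy, hb, h.Leq.trans (h.Leq.symm hLy) hab⟩⟩)
        · by_cases hb : b = some i
          · subst hb
            exact Or.inr (Or.inr ⟨Or.inr ⟨ha, hy, h.Leq.trans hab hLy⟩, Or.inl rfl⟩)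
          · exact Or.inl (Or.inr ⟨ha, hb, hab⟩)
    have hc : Commute (e i) (tProd t L') := H.commute_tProd (fun a b hne hab => by
      obtain ⟨h1, h2, -⟩ := hab.resolve_left hne
      exact H.e_t i a b h1 h2)
    refine ⟨K, L', σ, D, ⟨h.Keq, L'eq, h.Kinf, fun k hk hh => h.Linf k hk (L'L _ _ hh), h.Kinj,
      fun k l hk hl hh => h.Linj k l hk hl (L'L _ _ hh)⟩, ?_⟩
    calc nf g e t K L σ D * e i
        = tProd t K * g σ * (eProd e D * e i) * (tProd t L' * t (some i) y) * e i := by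
          rw [H.tProd_mul_t L'eq, hj, H.eProd_mul hDi, nf]
      _ = tProd t K * g σ * eProd e D * ((e i * tProd t L') * t (some i) y * e i) := by
          simp only [mul_assoc]
      _ = tProd t K * g σ * eProd e D * (tProd t L' * (e i * t (some i) y * e i)) := by
          rw [hc.eq]; simp only [mul_assoc]
      _ = tProd t K * g σ * eProd e D * (e i * tProd t L') := by rw [H.ete i y hy, hc.eq]
      _ = tProd t K * g σ * (eProd e D * e i) * tProd t L' := by simp only [mul_assoc]
      _ = nf g e t K L' σ D := by rw [H.eProd_mul hDi, nf]
  · push Not at hi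
    have hc : Commute (e i) (tProd t L) := H.commute_tProd (fun a b hne hab => by
      refine H.e_t i a b ?_ ?_
      · rintro rfl; exact hi b hne.symm hab
      · rintro rfl; exact hi a hne (h.Leq.symm hab))
    refine ⟨K, L, σ, fun j => D j ∧ j ≠ i, ⟨h.Keq, h.Leq, fun j hj => h.Kinf j hj.1,
      fun j hj => h.Linf j hj.1, fun j k hj hk => h.Kinj j k hj.1 hk.1,
      fun j k hj hk => h.Linj j k hj.1 hk.1⟩, ?_⟩
    rw [nf, mul_assoc, ← hc.eq, nf, ← H.eProd_mul_e]
    simp only [mul_assoc]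

theorem commute_t_eProd (H : Sys g e t) {D : Fin n → Prop} {x y : Option (Fin n)}
    (hx : ∀ i, x = some i → D i) (hy : ∀ i, y = some i → D i) :
    Commute (t x y) (eProd e D) :=
  commute_fprod (fun i hi => (H.e_t i x y (fun h => hi (hx i h)) (fun h => hi (hy i h))).symm)

/-- Joining two through classes, or a through class to the class of the extra point, lowers the
number of through classes: `t x y` is pulled through to the upper kernel. -/
theorem hasNF_mul_t_aux (H : Sys g e t) {K L : Option (Fin n) → Option (Fin n) → Prop}
    {σ : Equiv.Perm (Fin n)} {D : Fin n → Prop} (h : Red K L σ D) (d : Fin n)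
    (y : Option (Fin n)) (hd : D d) (hy : ∀ i, y = some i → D i) (hne : y ≠ some d) :
    HasNF g e t (nf g e t K L σ D * t (some d) y) := by
  refine ⟨joinRel K (some (σ d)) (y.map σ), joinRel L (some d) y, σ, fun j => D j ∧ j ≠ d,
    ⟨joinRel_equiv h.Keq _ _, joinRel_equiv h.Leq _ _, ?_, ?_, ?_, ?_⟩, ?_⟩
  · rintro k ⟨hk, hkd⟩ (h1 | ⟨h1, h2⟩ | ⟨h1, h2⟩)
    · exact h.Kinf k hk h1
    · exact hkd (h.Kinj _ _ hk hd h1)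
    · exact h.Kinf d hd h2
  · rintro k ⟨hk, hkd⟩ (h1 | ⟨h1, h2⟩ | ⟨h1, h2⟩)
    · exact h.Linf k hk h1
    · exact hkd (h.Linj _ _ hk hd h1)
    · exact h.Linf d hd h2
  · rintro k l ⟨hk, hkd⟩ ⟨hl, hld⟩ (h1 | ⟨h1, h2⟩ | ⟨h1, h2⟩)
    · exact h.Kinj _ _ hk hl h1
    · exact absurd (h.Kinj _ _ hk hd h1) hkd
    · exact absurd (h.Kinj _ _ hd hl h2).symm hld
  · rintro k l ⟨hk, hkd⟩ ⟨hl, hld⟩ (h1 | ⟨h1, h2⟩ | ⟨h1, h2⟩)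
    · exact h.Linj _ _ hk hl h1
    · exact absurd (h.Linj _ _ hk hd h1) hkd
    · exact absurd (h.Linj _ _ hd hl h2).symm hld
  · have hc : Commute (t (some d) y) (eProd e D) :=
      H.commute_t_eProd (fun i hi => by cases hi; exact hd) hy
    set τ := t (some d) y with hτ
    have h1 : τ * eProd e D * τ = τ * eProd e (fun j => D j ∧ j ≠ d) * τ := by
      calc τ * eProd e D * τ = eProd e D * (τ * τ) := by rw [hc.eq, mul_assoc]
        _ = eProd e D * (τ * e d * τ) := by
            rw [hτ, H.t_idem, H.tet d y hne]
        _ = τ * (eProd e D * e d) * τ := by rw [← mul_assoc, ← mul_assoc, ← hc.eq]; simp only [mul_assoc]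
        _ = _ := by rw [H.eProd_mul_e]
    have h2 : nf g e t K L σ D * τ = tProd t K * g σ * (τ * eProd e D * τ) * tProd t L := by
      calc nf g e t K L σ D * τ = tProd t K * g σ * eProd e D * (τ * tProd t L) := by
            rw [nf, mul_assoc, ← (H.commute_t_tProd L _ _).eq]
        _ = tProd t K * g σ * (eProd e D * (τ * τ)) * tProd t L := by
            rw [hτ, H.t_idem]; simp only [mul_assoc]
        _ = _ := by rw [hc.eq, mul_assoc (eProd e D)]
    rw [h2, h1]
    calc tProd t K * g σ * (τ * eProd e (fun j => D j ∧ j ≠ d) * τ) * tProd t L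
        = tProd t K * (g σ * τ) * eProd e (fun j => D j ∧ j ≠ d) * (τ * tProd t L) := by
          simp only [mul_assoc]
      _ = tProd t K * t (some (σ d)) (y.map σ) * g σ * eProd e (fun j => D j ∧ j ≠ d) *
            (tProd t L * τ) := by
          rw [hτ, H.g_t, (H.commute_t_tProd L _ _).eq]; simp only [mul_assoc]; rfl
      _ = _ := by rw [H.tProd_mul_t h.Keq, hτ, H.tProd_mul_t h.Leq, nf]

theorem hasNF_mul_t (H : Sys g e t) {m : M} (hm : HasNF g e t m) (x y : Option (Fin n)) :
    HasNF g e t (m * t x y) := by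
  obtain ⟨K, L, σ, D, h, rfl⟩ := hm
  have hnf : ∀ x y, nf g e t K L σ D * t x y =
      tProd t K * g σ * eProd e D * tProd t (joinRel L x y) := fun x y => by
    rw [nf, mul_assoc, H.tProd_mul_t h.Leq]
  by_cases hxy : L x y
  · rw [nf, mul_assoc, H.tProd_mul hxy]
    exact ⟨K, L, σ, D, h, rfl⟩
  -- replacing `x`, `y` by equivalent points does not change the join
  have hrep : ∀ x' y', L x x' → L y y' →
      nf g e t K L σ D * t x y = nf g e t K L σ D * t x' y' := by
    intro x' y' hx hy
    rw [hnf, hnf]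
    congr 2
    funext a b
    have s := @h.Leq.symm
    have tr := @h.Leq.trans
    refine propext (or_congr Iff.rfl (or_congr (and_congr ?_ ?_) (and_congr ?_ ?_)))
    · exact ⟨fun h1 => tr h1 hx, fun h1 => tr h1 (s hx)⟩
    · exact ⟨fun h1 => tr (s hy) h1, fun h1 => tr hy h1⟩
    · exact ⟨fun h1 => tr h1 hy, fun h1 => tr h1 (s hy)⟩
    · exact ⟨fun h1 => tr (s hx) h1, fun h1 => tr hx h1⟩
  by_cases hanch : (∃ x', L x x' ∧ ∀ i, x' = some i → D i) ∧
      (∃ y', L y y' ∧ ∀ i, y' = some i → D i)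
  · obtain ⟨⟨x', hx, hx'⟩, y', hy, hy'⟩ := hanch
    have hne : x' ≠ y' := fun hh => hxy (h.Leq.trans hx (hh ▸ h.Leq.symm hy))
    rw [hrep x' y' hx hy]
    rcases x' with _ | d
    · rcases y' with _ | d
      · exact absurd rfl hne
      · rw [H.t_symm]
        exact H.hasNF_mul_t_aux h d none (hy' d rfl) hx' hne
    · exact H.hasNF_mul_t_aux h d y' (hx' d rfl) hy' hne.symm
  · rw [hnf]
    refine ⟨K, joinRel L x y, σ, D, ⟨h.Keq, joinRel_equiv h.Leq _ _, h.Kinf, ?_, h.Kinj, ?_⟩, rfl⟩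
    · rintro k hk (h1 | ⟨h1, h2⟩ | ⟨h1, h2⟩)
      · exact h.Linf k hk h1
      · exact hanch ⟨⟨some k, h.Leq.symm h1, fun i hi => by cases hi; exact hk⟩,
          ⟨none, h2, fun i hi => by cases hi⟩⟩
      · exact hanch ⟨⟨none, h2, fun i hi => by cases hi⟩,
          ⟨some k, h.Leq.symm h1, fun i hi => by cases hi; exact hk⟩⟩
    · rintro k l hk hl (h1 | ⟨h1, h2⟩ | ⟨h1, h2⟩)
      · exact h.Linj _ _ hk hl h1
      · exact absurd ⟨⟨some k, h.Leq.symm h1, fun i hi => by cases hi; exact hk⟩,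
          ⟨some l, h2, fun i hi => by cases hi; exact hl⟩⟩ hanch
      · exact absurd ⟨⟨some l, h2, fun i hi => by cases hi; exact hl⟩,
          ⟨some k, h.Leq.symm h1, fun i hi => by cases hi; exact hk⟩⟩ hanch

end Sys

end NormalForms

/-! ### The symmetric relations in a monoid of binary relations -/

/-- The monoid of binary relations on the set of subsets of `[n]` (a subset being a map
`Fin n → Prop`), under composition of relations. -/
def BR (n : ℕ) : Type := (Fin n → Prop) → (Fin n → Prop) → Prop

theorem BR.ext {n : ℕ} {R S : BR n} (h : ∀ A B, R A B ↔ S A B) : R = S :=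
  funext fun A => funext fun B => propext (h A B)

instance {n : ℕ} : Monoid (BR n) where
  mul R S := fun A C => ∃ B, R A B ∧ S B C
  one := fun A B => A = B
  mul_assoc R S T := BR.ext fun A D =>
    ⟨fun ⟨C, ⟨B, h1, h2⟩, h3⟩ => ⟨B, h1, C, h2, h3⟩,
      fun ⟨B, h1, C, h2, h3⟩ => ⟨C, ⟨B, h1, h2⟩, h3⟩⟩
  one_mul R := BR.ext fun A B => ⟨fun ⟨_, h1, h2⟩ => h1 ▸ h2, fun h => ⟨A, rfl, h⟩⟩
  mul_one R := BR.ext fun A B => ⟨fun ⟨_, h1, h2⟩ => h2 ▸ h1, fun h => ⟨B, h, rfl⟩⟩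

theorem BR.mul_apply {n : ℕ} {R S : BR n} {A C : Fin n → Prop} :
    (R * S) A C ↔ ∃ B, R A B ∧ S B C := Iff.rfl

theorem BR.one_apply {n : ℕ} {A B : Fin n → Prop} : (1 : BR n) A B ↔ A = B := Iff.rfl

section BRel

variable {n : ℕ}

/-- The extension of a subset of `[n]` to `[n] ∪ {∞}`, not containing the extra point. -/
def ext0 (A : Fin n → Prop) (x : Option (Fin n)) : Prop := ∃ i, x = some i ∧ A i

@[simp] theorem ext0_some (A : Fin n → Prop) (i : Fin n) : ext0 A (some i) ↔ A i := by
  simp [ext0]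

@[simp] theorem ext0_none (A : Fin n → Prop) : ext0 A none ↔ False := by simp [ext0]

/-- The action of permutations by preimages, as relations. -/
def pr : Equiv.Perm (Fin n) →* BR n where
  toFun σ := fun A B => B = fun i => A (σ i)
  map_one' := BR.ext fun A B => by simpa [BR.one_apply] using eq_comm
  map_mul' σ τ := BR.ext fun A B =>
    ⟨fun h => ⟨_, rfl, h⟩, fun ⟨_, h1, h2⟩ => by subst h1; exact h2⟩

/-- Two subsets are related if they agree off `i`. -/
def er (i : Fin n) : BR n := fun A B => ∀ j, j ≠ i → (A j ↔ B j)

/-- The identity relation on the subsets containing both or none of `x` and `y`. -/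
def tr (x y : Option (Fin n)) : BR n := fun A B => A = B ∧ (ext0 A x ↔ ext0 A y)

theorem pr_apply {σ : Equiv.Perm (Fin n)} {A B : Fin n → Prop} :
    pr σ A B ↔ B = fun i => A (σ i) := Iff.rfl

theorem pr_apply' {σ : Equiv.Perm (Fin n)} {A B : Fin n → Prop} :
    pr σ A B ↔ A = fun i => B (σ⁻¹ i) := by
  rw [pr_apply]
  constructor <;> rintro rfl <;> simp

theorem pr_mul_apply {σ : Equiv.Perm (Fin n)} {R : BR n} {A C : Fin n → Prop} :
    (pr σ * R) A C ↔ R (fun i => A (σ i)) C := by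
  simp [BR.mul_apply, pr_apply]

theorem mul_pr_apply {σ : Equiv.Perm (Fin n)} {R : BR n} {A C : Fin n → Prop} :
    (R * pr σ) A C ↔ R A (fun i => C (σ⁻¹ i)) := by
  simp [BR.mul_apply, pr_apply']

theorem tr_mul_apply {x y : Option (Fin n)} {R : BR n} {A C : Fin n → Prop} :
    (tr x y * R) A C ↔ (ext0 A x ↔ ext0 A y) ∧ R A C := by
  constructor
  · rintro ⟨B, ⟨rfl, h⟩, h'⟩
    exact ⟨h, h'⟩
  · rintro ⟨h, h'⟩
    exact ⟨A, ⟨rfl, h⟩, h'⟩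

theorem mul_tr_apply {x y : Option (Fin n)} {R : BR n} {A C : Fin n → Prop} :
    (R * tr x y) A C ↔ R A C ∧ (ext0 C x ↔ ext0 C y) := by
  constructor
  · rintro ⟨B, h', rfl, h⟩
    exact ⟨h', h⟩
  · rintro ⟨h', h⟩
    exact ⟨C, h', rfl, h⟩

theorem ext0_map {σ : Equiv.Perm (Fin n)} {A : Fin n → Prop} {x : Option (Fin n)} :
    ext0 A (x.map σ) ↔ ext0 (fun i => A (σ i)) x := by
  cases x <;> simp

theorem ext0_congr {A B : Fin n → Prop} {i : Fin n} (h : ∀ j, j ≠ i → (A j ↔ B j))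
    {x : Option (Fin n)} (hx : x ≠ some i) : ext0 A x ↔ ext0 B x := by
  cases x with
  | none => simp
  | some j => simpa using h j (fun hh => hx (by rw [hh]))

theorem sys_br : Sys (n := n) pr er tr where
  g_e σ i := BR.ext fun A C => by
    rw [pr_mul_apply, mul_pr_apply]
    constructor
    · intro h j hj
      simpa using h (σ⁻¹ j) (fun hh => hj (by simp [← hh]))
    · intro h j hj
      simpa using h (σ j) (fun hh => hj (σ.injective hh))
  g_t σ x y := BR.ext fun A C => by
    rw [pr_mul_apply, tr_mul_apply, ext0_map, ext0_map, pr_apply, and_comm]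
    exact and_congr eq_comm Iff.rfl
  e_idem i := BR.ext fun A C =>
    ⟨fun ⟨B, h1, h2⟩ j hj => (h1 j hj).trans (h2 j hj), fun h => ⟨A, fun _ _ => Iff.rfl, h⟩⟩
  e_comm i j := by
    suffices hs : ∀ i j : Fin n, ∀ A C, (er i * er j) A C → (er j * er i) A C from
      BR.ext fun A C => ⟨hs i j A C, hs j i A C⟩
    rintro i j A C ⟨B, h1, h2⟩
    rcases eq_or_ne i j with rfl | hij
    · exact ⟨B, h1, h2⟩
    · refine ⟨fun k => (k = j ∧ C j) ∨ (k ≠ j ∧ A k), fun k hk => by simp [hk], fun k hk => ?_⟩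
      by_cases hkj : k = j
      · simp [hkj]
      · simpa [hkj] using (h1 k hk).trans (h2 k hkj)
  e_swap i j hij := by
    have key : ∀ A C, (er i * er j) A C ↔ ∀ k, k ≠ i → k ≠ j → (A k ↔ C k) := by
      refine fun A C => ⟨fun ⟨B, h1, h2⟩ k hi hj => (h1 k hi).trans (h2 k hj), fun h => ?_⟩
      refine ⟨fun k => (k = i ∧ C i) ∨ (k ≠ i ∧ A k), fun k hk => by simp [hk], fun k hk => ?_⟩
      by_cases hki : k = i
      · simp [hki]
      · simpa [hki] using h k hki hk
    refine BR.ext fun A C => ?_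
    rw [mul_pr_apply, key, key]
    refine forall_congr' fun k => imp_congr_right fun hi => imp_congr_right fun hj => ?_
    rw [Equiv.swap_inv, Equiv.swap_apply_of_ne_of_ne hi hj]
  t_self x := BR.ext fun A B => by simp [tr, BR.one_apply]
  t_symm x y := BR.ext fun A B => and_congr Iff.rfl iff_comm
  t_idem x y := BR.ext fun A B => by
    rw [tr_mul_apply]
    exact ⟨fun h => h.2, fun h => ⟨h.2, h⟩⟩
  t_comm x y z w := BR.ext fun A B => by
    rw [tr_mul_apply, tr_mul_apply]
    exact ⟨fun h => ⟨h.2.2, h.2.1, h.1⟩, fun h => ⟨h.2.2, h.2.1, h.1⟩⟩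
  t_trans x y z := BR.ext fun A B => by
    rw [tr_mul_apply, tr_mul_apply]
    exact ⟨fun h => ⟨h.1, h.2.1, h.1.trans h.2.2⟩, fun h => ⟨h.1, h.2.1, h.1.symm.trans h.2.2⟩⟩
  t_swap i j := BR.ext fun A B => by
    rw [tr_mul_apply, pr_apply, tr, and_comm]
    refine and_congr_left fun h => ?_
    have : (fun k => A (Equiv.swap i j k)) = A := by
      funext k
      rcases eq_or_ne k i with rfl | hi
      · simpa using (show A k ↔ A j by simpa using h).symm
      rcases eq_or_ne k j with rfl | hj
      · simpa using h
      · rw [Equiv.swap_apply_of_ne_of_ne hi hj]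
    rw [this, eq_comm]
  e_t i x y hx hy := BR.ext fun A B => by
    rw [mul_tr_apply, tr_mul_apply, and_comm]
    refine and_congr_left fun h => ?_
    rw [ext0_congr h hx, ext0_congr h hy]
  ete i x hx := BR.ext fun A C => by
    constructor
    · rintro ⟨B, h1, h2⟩ j hj
      rw [mul_tr_apply] at h1
      exact (h1.1 j hj).trans (h2 j hj)
    · intro h
      have hB : ∀ j, j ≠ i → (A j ↔ ((j = i ∧ ext0 A x) ∨ (j ≠ i ∧ A j))) :=
        fun j hj => by simp [hj]
      refine ⟨fun j => (j = i ∧ ext0 A x) ∨ (j ≠ i ∧ A j), mul_tr_apply.mpr ⟨hB, ?_⟩,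
        fun j hj => (hB j hj).symm.trans (h j hj)⟩
      rw [← ext0_congr hB hx]
      simp
  tet i x hx := BR.ext fun A C => by
    rw [mul_tr_apply, tr_mul_apply]
    constructor
    · rintro ⟨⟨h1, h2⟩, h3⟩
      refine ⟨?_, h1⟩
      funext j
      by_cases hj : j = i
      · subst hj
        rw [ext0_some] at h1 h3
        exact propext (h1.trans ((ext0_congr h2 hx).trans h3.symm))
      · exact propext (h2 j hj)
    · rintro ⟨rfl, h⟩
      exact ⟨⟨h, fun _ _ => Iff.rfl⟩, h⟩

/-- A subset is compatible with a relation on `[n] ∪ {∞}` if it is a union of classes (and does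
not meet the class of the extra point). -/
def Inv (K : Option (Fin n) → Option (Fin n) → Prop) (A : Fin n → Prop) : Prop :=
  ∀ x y, K x y → (ext0 A x ↔ ext0 A y)

theorem tProd_tr_apply {K : Option (Fin n) → Option (Fin n) → Prop} {A B : Fin n → Prop} :
    tProd tr K A B ↔ A = B ∧ Inv K A := by
  classical
  have : ∀ l : List (Option (Fin n) × Option (Fin n)),
      (l.map (fun p => tr p.1 p.2)).prod A B ↔
        A = B ∧ ∀ p ∈ l, (ext0 A p.1 ↔ ext0 A p.2) := by
    intro l
    induction l with
    | nil => simp [BR.one_apply]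
    | cons p l ih =>
      rw [List.map_cons, List.prod_cons, tr_mul_apply, ih]
      simp only [List.forall_mem_cons]
      tauto
  rw [tProd, fprod, this]
  simp [Inv]

theorem eProd_er_apply {D : Fin n → Prop} {A B : Fin n → Prop} :
    eProd er D A B ↔ ∀ i, D i → (A i ↔ B i) := by
  classical
  have : ∀ (l : List (Fin n)) (A : Fin n → Prop),
      (l.map er).prod A B ↔ ∀ i, i ∉ l → (A i ↔ B i) := by
    intro l
    induction l with
    | nil => intro A; simp [BR.one_apply, funext_iff]
    | cons i l ih =>
      intro A
      rw [List.map_cons, List.prod_cons]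
      constructor
      · rintro ⟨C, h1, h2⟩ j hj
        rw [List.mem_cons, not_or] at hj
        exact (h1 j hj.1).trans ((ih C).mp h2 j hj.2)
      · intro h
        refine ⟨fun j => (j = i ∧ B i) ∨ (j ≠ i ∧ A j), fun j hj => by simp [hj],
          (ih _).mpr fun j hj => ?_⟩
        by_cases hji : j = i
        · simp [hji]
        · simpa [hji] using h j (by simp [hji, hj])
  rw [eProd, fprod, this]
  simp

/-- The relation attached to normal form data. -/
theorem nf_br_apply {K L : Option (Fin n) → Option (Fin n) → Prop} {σ : Equiv.Perm (Fin n)}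
    {D : Fin n → Prop} {A B : Fin n → Prop} :
    nf pr er tr K L σ D A B ↔ Inv K A ∧ Inv L B ∧ ∀ i, D i → (A (σ i) ↔ B i) := by
  rw [nf]
  constructor
  · rintro ⟨B', ⟨C, ⟨A', h1, h2⟩, h3⟩, h4⟩
    obtain ⟨rfl, hA⟩ := tProd_tr_apply.mp h1
    obtain ⟨rfl, hB⟩ := tProd_tr_apply.mp h4
    rw [pr_apply] at h2
    subst h2
    exact ⟨hA, hB, eProd_er_apply.mp h3⟩
  · rintro ⟨hA, hB, h⟩
    exact ⟨B, ⟨_, ⟨A, tProd_tr_apply.mpr ⟨rfl, hA⟩, rfl⟩, eProd_er_apply.mpr h⟩,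
      tProd_tr_apply.mpr ⟨rfl, hB⟩⟩

/-- The indicator of a class of an equivalence relation, other than the class of `∞`. -/
theorem ext0_class {K : Option (Fin n) → Option (Fin n) → Prop} {w : Option (Fin n)}
    (hw : ¬ K w none) (x : Option (Fin n)) : ext0 (fun i => K w (some i)) x ↔ K w x := by
  cases x <;> simp [hw]

theorem inv_class {K : Option (Fin n) → Option (Fin n) → Prop} (hK : Equivalence K)
    {w : Option (Fin n)} (hw : ¬ K w none) : Inv K (fun i => K w (some i)) := fun x y h => by
  rw [ext0_class hw, ext0_class hw]
  exact ⟨fun h' => hK.trans h' h, fun h' => hK.trans h' (hK.symm h)⟩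

/-- An equivalence relation is determined by its compatible subsets. -/
theorem rel_iff_inv {K : Option (Fin n) → Option (Fin n) → Prop} (hK : Equivalence K)
    (x y : Option (Fin n)) : K x y ↔ ∀ A, Inv K A → (ext0 A x ↔ ext0 A y) := by
  refine ⟨fun h A hA => hA x y h, fun h => ?_⟩
  by_cases hx : K x none
  · by_cases hy : K y none
    · exact hK.trans hx (hK.symm hy)
    · have := h _ (inv_class hK hy)
      rw [ext0_class hy, ext0_class hy] at this
      exact hK.symm (this.mpr (hK.refl y))
  · have := h _ (inv_class hK hx)
    rw [ext0_class hx, ext0_class hx] at this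
    exact this.mp (hK.refl x)

theorem Red.dom {K L : Option (Fin n) → Option (Fin n) → Prop} {σ : Equiv.Perm (Fin n)}
    {D : Fin n → Prop} (h : Red K L σ D) (A : Fin n → Prop) :
    Inv K A ↔ ∃ B, nf pr er tr K L σ D A B := by
  refine ⟨fun hA => ⟨fun j => ∃ i, D i ∧ L (some j) (some i) ∧ A (σ i),
    nf_br_apply.mpr ⟨hA, fun x y hxy => ?_, fun i hi => ?_⟩⟩, fun ⟨B, hB⟩ => (nf_br_apply.mp hB).1⟩
  · have key : ∀ x : Option (Fin n),
        ext0 (fun j => ∃ i, D i ∧ L (some j) (some i) ∧ A (σ i)) x ↔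
          ∃ i, D i ∧ L x (some i) ∧ A (σ i) := by
      rintro (_ | j)
      · simp only [ext0_none, false_iff]
        rintro ⟨i, h1, h2, -⟩
        exact h.Linf i h1 (h.Leq.symm h2)
      · simp
    rw [key, key]
    exact ⟨fun ⟨i, h1, h2, h3⟩ => ⟨i, h1, h.Leq.trans (h.Leq.symm hxy) h2, h3⟩,
      fun ⟨i, h1, h2, h3⟩ => ⟨i, h1, h.Leq.trans hxy h2, h3⟩⟩
  · refine ⟨fun h' => ⟨i, hi, h.Leq.refl _, h'⟩, fun ⟨j, h1, h2, h3⟩ => ?_⟩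
    rwa [h.Linj i j hi h1 h2]

theorem Red.cod {K L : Option (Fin n) → Option (Fin n) → Prop} {σ : Equiv.Perm (Fin n)}
    {D : Fin n → Prop} (h : Red K L σ D) (B : Fin n → Prop) :
    Inv L B ↔ ∃ A, nf pr er tr K L σ D A B := by
  refine ⟨fun hB => ⟨fun j => ∃ i, D i ∧ K (some j) (some (σ i)) ∧ B i,
    nf_br_apply.mpr ⟨fun x y hxy => ?_, hB, fun i hi => ?_⟩⟩,
    fun ⟨A, hA⟩ => (nf_br_apply.mp hA).2.1⟩
  · have key : ∀ x : Option (Fin n),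
        ext0 (fun j => ∃ i, D i ∧ K (some j) (some (σ i)) ∧ B i) x ↔
          ∃ i, D i ∧ K x (some (σ i)) ∧ B i := by
      rintro (_ | j)
      · simp only [ext0_none, false_iff]
        rintro ⟨i, h1, h2, -⟩
        exact h.Kinf i h1 (h.Keq.symm h2)
      · simp
    rw [key, key]
    exact ⟨fun ⟨i, h1, h2, h3⟩ => ⟨i, h1, h.Keq.trans (h.Keq.symm hxy) h2, h3⟩,
      fun ⟨i, h1, h2, h3⟩ => ⟨i, h1, h.Keq.trans hxy h2, h3⟩⟩
  · refine ⟨fun ⟨j, h1, h2, h3⟩ => ?_, fun h' => ⟨i, hi, h.Keq.refl _, h'⟩⟩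
    rwa [h.Kinj i j hi h1 h2]

/-- Reduced data with the same relation join the same classes. -/
theorem Red.joins {K L : Option (Fin n) → Option (Fin n) → Prop} {σ σ' : Equiv.Perm (Fin n)}
    {D D' : Fin n → Prop} (h : Red K L σ D)
    (heq : nf pr er tr K L σ D = nf pr er tr K L σ' D') (i : Fin n) (hi : D i) :
    ∃ i', D' i' ∧ L (some i) (some i') ∧ K (some (σ i)) (some (σ' i')) := by
  have hA := inv_class h.Keq (h.Kinf i hi)
  have hB := inv_class h.Leq (h.Linf i hi)
  have h1 : nf pr er tr K L σ' D' (fun x => K (some (σ i)) (some x))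
      (fun x => L (some i) (some x)) := by
    rw [← heq, nf_br_apply]
    refine ⟨hA, hB, fun j hj => ⟨fun hk => ?_, fun hl => ?_⟩⟩
    · rw [h.Kinj i j hi hj hk]; exact h.Leq.refl _
    · rw [h.Linj i j hi hj hl]; exact h.Keq.refl _
  obtain ⟨-, -, h2⟩ := nf_br_apply.mp h1
  by_contra hcon
  have h3 : ∀ j, D' j → ¬ L (some i) (some j) := fun j hj hl =>
    hcon ⟨j, hj, hl, (h2 j hj).mpr hl⟩
  -- the class of `i` would be related to the empty set
  have h4 : nf pr er tr K L σ D (fun _ => False) (fun x => L (some i) (some x)) := by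
    rw [heq, nf_br_apply]
    refine ⟨fun x y _ => ?_, hB, fun j hj => ⟨False.elim, h3 j hj⟩⟩
    simp [ext0]
  exact ((nf_br_apply.mp h4).2.2 i hi).mpr (h.Leq.refl _)

/-- Reduced normal forms are separated by their relations. -/
theorem Sys.nf_inj {M : Type*} [Monoid M] {g : Equiv.Perm (Fin n) →* M} {e : Fin n → M}
    {t : Option (Fin n) → Option (Fin n) → M} (H : Sys g e t)
    {K L K' L' : Option (Fin n) → Option (Fin n) → Prop} {σ σ' : Equiv.Perm (Fin n)}
    {D D' : Fin n → Prop} (h : Red K L σ D) (h' : Red K' L' σ' D')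
    (heq : nf pr er tr K L σ D = nf pr er tr K' L' σ' D') :
    nf g e t K L σ D = nf g e t K' L' σ' D' := by
  obtain rfl : K = K' := by
    funext x y
    refine propext ?_
    rw [rel_iff_inv h.Keq, rel_iff_inv h'.Keq]
    refine forall_congr' fun A => ?_
    rw [h.dom, h'.dom, heq]
  obtain rfl : L = L' := by
    funext x y
    refine propext ?_
    rw [rel_iff_inv h.Leq, rel_iff_inv h'.Leq]
    refine forall_congr' fun A => ?_
    rw [h.cod, h'.cod, heq]
  exact H.nf_unique h h' (h.joins heq) (h'.joins heq.symm)

end BRel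

/-! ### The presented monoid and its map to relations -/

section Presented

variable {M : Type*} [Monoid M] {n : ℕ}

theorem adj_mul_self (n i : ℕ) : adj n i * adj n i = 1 := by
  unfold adj
  split_ifs
  · exact Equiv.swap_mul_self _ _
  · exact mul_one 1

/-- The symmetric relations imply the defining relations. -/
theorem Sys.gens {g : Equiv.Perm (Fin n) →* M} {e : Fin n → M}
    {t : Option (Fin n) → Option (Fin n) → M} (H : Sys g e t) (hn : 2 ≤ n) :
    Gens n (fun i => g (adj n i)) (e ⟨0, by omega⟩)
      (t (some ⟨0, by omega⟩) (some ⟨1, by omega⟩)) (t (some ⟨0, by omega⟩) none) := by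
  have ss : ∀ i, g (adj n i) * g (adj n i) = 1 := fun i => by
    rw [← map_mul, adj_mul_self, map_one]
  have ce : ∀ i x, g (adj n i) * e x * g (adj n i) = e (adj n i x) := fun i x => by
    rw [H.g_e, mul_assoc, ss, mul_one]
  have ct : ∀ i x y, g (adj n i) * t x y * g (adj n i) =
      t (x.map (adj n i)) (y.map (adj n i)) := fun i x y => by
    rw [H.g_t, mul_assoc, ss, mul_one]
  have hs : adj n 0 = Equiv.swap ⟨0, by omega⟩ ⟨1, by omega⟩ := by
    simp [adj, show 1 < n by omega]
  have L : ∀ i (h : i + 1 < n), adj n i ⟨i, by omega⟩ = ⟨i + 1, h⟩ := fun i h =>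
    adj_apply_left h
  have R : ∀ i (h : i + 1 < n), adj n i ⟨i + 1, h⟩ = ⟨i, by omega⟩ := fun i h =>
    adj_apply_right h
  have F : ∀ i j (h : j < n), j ≠ i → j ≠ i + 1 → adj n i ⟨j, h⟩ = ⟨j, h⟩ := fun i j h h1 h2 =>
    adj_apply_of_ne _ h1 h2
  have ne : ∀ {i j : ℕ} (hi : i < n) (hj : j < n), i ≠ j →
      (⟨i, hi⟩ : Fin n) ≠ ⟨j, hj⟩ := fun hi hj h h' => h (by simpa using h')
  have ne' : ∀ {i j : ℕ} (hi : i < n) (hj : j < n), i ≠ j →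
      some (⟨i, hi⟩ : Fin n) ≠ some ⟨j, hj⟩ := fun hi hj h h' => h (by simpa using h')
  have se : g (adj n 0) * e ⟨0, by omega⟩ * g (adj n 0) = e ⟨1, by omega⟩ := by
    rw [ce, L 0 (by omega)]
  have so : g (adj n 0) * t (some ⟨0, by omega⟩) none * g (adj n 0) =
      t (some ⟨1, by omega⟩) none := by
    rw [ct, Option.map_some, L 0 (by omega), Option.map_none]
  -- `o_1 o_2` absorbs the transposition of the first two points
  have oo1 : t (some ⟨0, by omega⟩) none * t (some ⟨1, by omega⟩) none =
      t (some ⟨0, by omega⟩) none * t (some ⟨0, by omega⟩) (some ⟨1, by omega⟩) := by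
    rw [H.t_symm (some ⟨1, by omega⟩) none, H.t_trans]
  have q0 : t (some ⟨0, by omega⟩) (some ⟨1, by omega⟩) * g (adj n 0) =
      t (some ⟨0, by omega⟩) (some ⟨1, by omega⟩) := by rw [hs, H.t_swap]
  have comm3 : ∀ {i : ℕ}, 1 ≤ i → i < n - 1 →
      adj n i ⟨0, by omega⟩ = ⟨0, by omega⟩ := fun {i} h1 h2 => F i 0 (by omega) (by omega) (by omega)
  refine
    { cox := ⟨fun i _ => ss i, fun i j h1 h2 => ?_, fun i h => ?_⟩
      ee := H.e_idem _
      eqe := H.ete _ _ (ne' _ _ (by omega))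
      eoe := H.ete _ _ (by simp)
      qq := H.t_idem _ _
      qeq := H.tet _ _ (ne' _ _ (by omega))
      qa := q0
      aq := ?_
      e_a := fun i h1 h2 => ?_
      q_a := fun i h1 h2 => ?_
      eaea := ?_
      eaea' := ?_
      qaqa := fun h => ?_
      qwqw := fun h => ?_
      q_e := fun h => ?_
      oo := H.t_idem _ _
      oeo := H.tet _ _ (by simp)
      o_a := fun i h1 h2 => ?_
      oaoa := ?_
      aoao := ?_
      oao := ?_
      oq := H.t_comm _ _ _ _
      e_o := ?_
      q_o := fun h => ?_ }
  · simp only [← map_mul, (cox_adj n).comm i j h1 h2]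
  · simp only [← map_mul, (cox_adj n).braid i h]
  · rw [H.g_t, Option.map_some, Option.map_some, L 0 (by omega), R 0 (by omega), H.t_symm, q0]
  · rw [H.g_e, comm3 h1 h2]
  · rw [H.g_t, Option.map_some, Option.map_some, F i 0 _ (by omega) (by omega),
      F i 1 _ (by omega) (by omega)]
  · rw [se, mul_assoc (e _), mul_assoc (e _), se, H.e_comm]
  · rw [mul_assoc (e _), mul_assoc (e _), se, H.g_e, L 0 (by omega),
      ← mul_assoc, hs, H.e_swap _ _ (ne _ _ (by omega))]
  · have h2 : g (adj n 1) * t (some ⟨0, by omega⟩) (some ⟨1, by omega⟩) * g (adj n 1) =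
        t (some ⟨0, by omega⟩) (some ⟨2, by omega⟩) := by
      rw [ct, Option.map_some, Option.map_some, F 1 0 _ (by omega) (by omega), L 1 (by omega)]
    rw [h2, mul_assoc (t _ _), mul_assoc (t _ _), h2, H.t_comm]
  · have c02 : ∀ z, g (adj n 0) * (g (adj n 2) * z) = g (adj n 2) * (g (adj n 0) * z) := by
      intro z
      rw [← mul_assoc, ← map_mul, (cox_adj n).comm 0 2 (by omega) h, map_mul, mul_assoc]
    have hw : (g (adj n 1) * g (adj n 0) * g (adj n 2) * g (adj n 1)) *
        t (some ⟨0, by omega⟩) (some ⟨1, by omega⟩) *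
        (g (adj n 1) * g (adj n 0) * g (adj n 2) * g (adj n 1)) =
        t (some ⟨2, by omega⟩) (some ⟨3, by omega⟩) := by
      calc _ = g (adj n 1) * (g (adj n 0) * (g (adj n 2) * (g (adj n 1) *
            t (some ⟨0, by omega⟩) (some ⟨1, by omega⟩) * g (adj n 1)) * g (adj n 2)) *
            g (adj n 0)) * g (adj n 1) := by
            simp only [mul_assoc]
            rw [c02 (g (adj n 1))]
        _ = _ := by
          rw [ct, ct, ct, ct]
          simp only [Option.map_some]
          rw [F 1 0 _ (by omega) (by omega), L 1 (by omega), F 2 0 _ (by omega) (by omega),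
            L 2 (by omega), L 0 (by omega), F 0 3 _ (by omega) (by omega), L 1 (by omega),
            F 1 3 _ (by omega) (by omega)]
    rw [hw, mul_assoc (t _ _), mul_assoc (t _ _), hw, H.t_comm]
  · have h2 : g (adj n 1) * g (adj n 0) * e ⟨0, by omega⟩ * g (adj n 0) * g (adj n 1) =
        e ⟨2, by omega⟩ := by
      rw [mul_assoc (g (adj n 1)), mul_assoc (g (adj n 1)), se, ce, L 1 (by omega)]
    rw [h2, H.e_t _ _ _ (ne' _ _ (by omega)) (ne' _ _ (by omega))]
  · rw [H.g_t, Option.map_some, comm3 h1 h2, Option.map_none]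
  · rw [so, mul_assoc (t _ _), mul_assoc (t _ _), so, H.t_comm]
  · rw [so, mul_assoc (t _ _), H.g_t, Option.map_some, L 0 (by omega), Option.map_none,
      ← mul_assoc, oo1, mul_assoc (t _ _), q0, ← oo1, H.t_comm]
  · rw [mul_assoc (t _ _), H.g_t, Option.map_some, L 0 (by omega), Option.map_none,
      ← mul_assoc, oo1, mul_assoc (t _ _), q0]
  · rw [so, mul_assoc (e _), mul_assoc (e _), so,
      H.e_t _ _ _ (ne' _ _ (by omega)) (by simp)]
  · have h2 : g (adj n 1) * g (adj n 0) * t (some ⟨0, by omega⟩) none * g (adj n 0) *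
        g (adj n 1) = t (some ⟨2, by omega⟩) none := by
      rw [mul_assoc (g (adj n 1)), mul_assoc (g (adj n 1)), so, ct, Option.map_some,
        L 1 (by omega), Option.map_none]
    rw [h2, H.t_comm]

/-- The value of a letter, given elements `a i`, `e`, `q`, `o` of a monoid. -/
def letter (a : ℕ → M) (e q o : M) : SEQO1 n → M
  | .s i => a i
  | .e => e
  | .q => q
  | .o => o

theorem Gens.rel_prod {a : ℕ → M} {e q o : M} (H : Gens n a e q o) {u v : List (SEQO1 n)}
    (h : RelSEQO1 n u v) :
    (u.map (letter a e q o)).prod = (v.map (letter a e q o)).prod := by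
  cases h with
  | r45 i j h =>
    rcases h with h | h
    · simpa [letter] using H.cox.comm i j h j.2
    · simpa [letter] using (H.cox.comm j i h i.2).symm
  | r46 i j h =>
    have hi := i.2
    have hj := j.2
    rcases h with h | h
    · simpa [letter, ← h, mul_assoc] using H.cox.braid i (by omega)
    · simpa [letter, ← h, mul_assoc] using (H.cox.braid j (by omega)).symm
  | r44 i => simpa [letter] using H.cox.sq i i.2
  | r47a => simpa [letter] using H.ee
  | r47b => simpa [letter, mul_assoc] using H.eqe.symm
  | r47c => simpa [letter, mul_assoc] using H.eoe.symm
  | r48a => simpa [letter] using H.qq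
  | r48b => simpa [letter, mul_assoc] using H.qeq.symm
  | r48c h => simpa [letter, s1'] using H.qa.symm
  | r48d h => simpa [letter, s1'] using H.aq.symm
  | r49 i h => simpa [letter] using H.e_a i h i.2
  | r50 i h => simpa [letter] using H.q_a i h i.2
  | r51a h => simpa [letter, s1', mul_assoc] using H.eaea
  | r51b h => simpa [letter, s1', mul_assoc] using H.eaea'
  | r52 h => simpa [letter, s2', mul_assoc] using H.qaqa h
  | r53 h => simpa [letter, s1', s2', s3', mul_assoc] using H.qwqw h
  | r54 h => simpa [letter, s1', s2', mul_assoc] using H.q_e h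
  | r55a => simpa [letter] using H.oo
  | r55b => simpa [letter, mul_assoc] using H.oeo.symm
  | r56 i h => simpa [letter] using H.o_a i h i.2
  | r57a h => simpa [letter, s1', mul_assoc] using H.oaoa
  | r57b h => simpa [letter, s1', mul_assoc] using H.aoao
  | r57c h => simpa [letter, s1', mul_assoc] using H.oao
  | r57d => simpa [letter] using H.oq
  | r58 h => simpa [letter, s1', mul_assoc] using H.e_o
  | r59 h => simpa [letter, s1', s2', mul_assoc] using H.q_o h

theorem gens_of_rel (hn : 2 ≤ n) {a : ℕ → M} {e q o : M}
    (H : ∀ u v, RelSEQO1 n u v →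
      (u.map (letter a e q o)).prod = (v.map (letter a e q o)).prod) : Gens n a e q o where
  cox :=
    { sq := fun i h => by simpa [letter] using H _ _ (.r44 ⟨i, h⟩)
      comm := fun i j hij h => by
        simpa [letter] using H _ _ (.r45 ⟨i, by omega⟩ ⟨j, h⟩ (Or.inl hij))
      braid := fun i h => by
        simpa [letter, mul_assoc] using H _ _ (.r46 ⟨i, by omega⟩ ⟨i + 1, h⟩ (Or.inl rfl)) }
  ee := by simpa [letter] using H _ _ .r47a
  eqe := by simpa [letter, mul_assoc] using (H _ _ .r47b).symm
  eoe := by simpa [letter, mul_assoc] using (H _ _ .r47c).symm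
  qq := by simpa [letter] using H _ _ .r48a
  qeq := by simpa [letter, mul_assoc] using (H _ _ .r48b).symm
  qa := by simpa [letter, s1'] using (H _ _ (.r48c (by omega))).symm
  aq := by simpa [letter, s1'] using (H _ _ (.r48d (by omega))).symm
  e_a i h1 h2 := by simpa [letter] using H _ _ (.r49 ⟨i, h2⟩ h1)
  q_a i h1 h2 := by simpa [letter] using H _ _ (.r50 ⟨i, h2⟩ h1)
  eaea := by simpa [letter, s1', mul_assoc] using H _ _ (.r51a (by omega))
  eaea' := by simpa [letter, s1', mul_assoc] using H _ _ (.r51b (by omega))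
  qaqa h := by simpa [letter, s2', mul_assoc] using H _ _ (.r52 h)
  qwqw h := by simpa [letter, s1', s2', s3', mul_assoc] using H _ _ (.r53 h)
  q_e h := by simpa [letter, s1', s2', mul_assoc] using H _ _ (.r54 h)
  oo := by simpa [letter] using H _ _ .r55a
  oeo := by simpa [letter, mul_assoc] using (H _ _ .r55b).symm
  o_a i h1 h2 := by simpa [letter] using H _ _ (.r56 ⟨i, h2⟩ h1)
  oaoa := by simpa [letter, s1', mul_assoc] using H _ _ (.r57a (by omega))
  aoao := by simpa [letter, s1', mul_assoc] using H _ _ (.r57b (by omega))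
  oao := by simpa [letter, s1', mul_assoc] using H _ _ (.r57c (by omega))
  oq := by simpa [letter] using H _ _ .r57d
  e_o := by simpa [letter, s1', mul_assoc] using H _ _ (.r58 (by omega))
  q_o h := by simpa [letter, s1', s2', mul_assoc] using H _ _ (.r59 h)

/-- The congruence on words generated by the defining relations. -/
def con (n : ℕ) : Con (FreeMonoid (SEQO1 n)) where
  r u v := CongGen (RelSEQO1 n) u.toList v.toList
  iseqv := ⟨fun _ => .refl _, fun h => .symm h, fun h h' => .trans h h'⟩
  mul' h h' := .mul h h'

/-- The class of a word in the presented monoid. -/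
def cls (w : List (SEQO1 n)) : (con n).Quotient := (con n).mk' (FreeMonoid.ofList w)

theorem cls_eq {u v : List (SEQO1 n)} : cls u = cls v ↔ CongGen (RelSEQO1 n) u v :=
  (con n).eq

theorem cls_append (u v : List (SEQO1 n)) : cls (u ++ v) = cls u * cls v := rfl

theorem cls_surj (m : (con n).Quotient) : ∃ w, cls w = m := by
  obtain ⟨w, rfl⟩ := (con n).mk'_surjective m
  exact ⟨w.toList, rfl⟩

/-- The images of the letters `s_i` in the presented monoid, with the value `1` for indices out
of range. -/
def clsA (n i : ℕ) : (con n).Quotient := if h : i < n - 1 then cls [.s ⟨i, h⟩] else 1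

theorem prod_cls (w : List (SEQO1 n)) :
    (w.map (letter (clsA n) (cls [.e]) (cls [.q]) (cls [.o]))).prod = cls w := by
  induction w with
  | nil => rfl
  | cons x w ih =>
    rw [List.map_cons, List.prod_cons, ih, show x :: w = [x] ++ w from rfl, cls_append]
    congr 1
    cases x <;> simp [letter, clsA]

theorem gens_cls (hn : 2 ≤ n) : Gens n (clsA n) (cls [.e]) (cls [.q]) (cls [.o]) :=
  gens_of_rel hn fun u v h => by
    rw [prod_cls, prod_cls, cls_eq]
    exact .rel h

/-- The homomorphism from the presented monoid determined by elements satisfying the defining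
relations. -/
def Gens.hom {a : ℕ → M} {e q o : M} (H : Gens n a e q o) : (con n).Quotient →* M :=
  (con n).lift (FreeMonoid.lift (letter a e q o)) fun u v h => by
    change CongGen (RelSEQO1 n) u.toList v.toList at h
    rw [Con.ker_rel, FreeMonoid.lift_apply, FreeMonoid.lift_apply]
    generalize u.toList = u at h ⊢
    generalize v.toList = v at h ⊢
    induction h with
    | rel h => exact H.rel_prod h
    | refl _ => rfl
    | symm _ ih => exact ih.symm
    | trans _ _ ih ih' => exact ih.trans ih'
    | mul _ _ ih ih' => rw [List.map_append, List.map_append, List.prod_append,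
        List.prod_append, ih, ih']

theorem Gens.hom_cls {a : ℕ → M} {e q o : M} (H : Gens n a e q o) (w : List (SEQO1 n)) :
    H.hom (cls w) = (w.map (letter a e q o)).prod :=
  FreeMonoid.lift_apply (letter a e q o) (FreeMonoid.ofList w)

/-- Families satisfying the symmetric relations are determined by their values on the
generators. -/
theorem Sys.ext_gens (hn : 2 ≤ n) {g g' : Equiv.Perm (Fin n) →* M} {e e' : Fin n → M}
    {t t' : Option (Fin n) → Option (Fin n) → M} (H : Sys g e t) (H' : Sys g' e' t')
    (hg : ∀ i, i + 1 < n → g (adj n i) = g' (adj n i))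
    (he : e ⟨0, by omega⟩ = e' ⟨0, by omega⟩)
    (hq : t (some ⟨0, by omega⟩) (some ⟨1, by omega⟩) =
      t' (some ⟨0, by omega⟩) (some ⟨1, by omega⟩))
    (ho : t (some ⟨0, by omega⟩) none = t' (some ⟨0, by omega⟩) none) :
    g = g' ∧ e = e' ∧ t = t' := by
  have hadj : ∀ i, (adj n i)⁻¹ = adj n i := fun i => inv_eq_of_mul_eq_one_left (adj_mul_self n i)
  obtain rfl : g = g' := by
    refine MonoidHom.ext fun f => ?_
    have hf := mem_closure_adj 0 f (fun x hx => absurd hx (Nat.not_lt_zero _))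
    induction hf using Subgroup.closure_induction'' with
    | mem f hf =>
      obtain ⟨i, -, hi, rfl⟩ := hf
      exact hg i hi
    | inv_mem f hf =>
      obtain ⟨i, -, hi, rfl⟩ := hf
      rw [hadj]
      exact hg i hi
    | one => rw [map_one, map_one]
    | mul x y _ _ hx hy => rw [map_mul, map_mul, hx, hy]
  have cancel : ∀ {σ} {x y : M}, x * g σ = y * g σ → x = y := fun {σ x y} h => by
    have h1 : g σ * g σ⁻¹ = 1 := by rw [← map_mul, mul_inv_cancel, map_one]
    rw [← mul_one x, ← h1, ← mul_assoc, h, mul_assoc, h1, mul_one]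
  refine ⟨rfl, ?_, ?_⟩
  · funext i
    apply cancel (σ := Equiv.swap ⟨0, by omega⟩ i)
    have h1 := H.g_e (Equiv.swap ⟨0, by omega⟩ i) ⟨0, by omega⟩
    have h2 := H'.g_e (Equiv.swap ⟨0, by omega⟩ i) ⟨0, by omega⟩
    rw [Equiv.swap_apply_left] at h1 h2
    rw [← h1, ← h2, he]
  have hn' : ∀ i, t (some i) none = t' (some i) none := by
    intro i
    apply cancel (σ := Equiv.swap ⟨0, by omega⟩ i)
    have h1 := H.g_t (Equiv.swap ⟨0, by omega⟩ i) (some ⟨0, by omega⟩) none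
    have h2 := H'.g_t (Equiv.swap ⟨0, by omega⟩ i) (some ⟨0, by omega⟩) none
    rw [Option.map_some, Equiv.swap_apply_left, Option.map_none] at h1 h2
    rw [← h1, ← h2, ho]
  funext x y
  rcases x with _ | i <;> rcases y with _ | j
  · rw [H.t_self, H'.t_self]
  · rw [H.t_symm, hn', H'.t_symm]
  · exact hn' i
  · rcases eq_or_ne i j with rfl | hij
    · rw [H.t_self, H'.t_self]
    obtain ⟨σ, hσ⟩ := exists_perm hn ![i, j] (by
      intro a b
      fin_cases a <;> fin_cases b <;> simp [hij, hij.symm])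
    have h0 : σ ⟨0, by omega⟩ = i := hσ 0
    have h1 : σ ⟨1, by omega⟩ = j := hσ 1
    apply cancel (σ := σ)
    have h2 := H.g_t σ (some ⟨0, by omega⟩) (some ⟨1, by omega⟩)
    have h3 := H'.g_t σ (some ⟨0, by omega⟩) (some ⟨1, by omega⟩)
    rw [Option.map_some, Option.map_some, h0, h1] at h2 h3
    rw [← h2, ← h3, hq]

theorem Sys.map {M' : Type*} [Monoid M'] {g : Equiv.Perm (Fin n) →* M} {e : Fin n → M}
    {t : Option (Fin n) → Option (Fin n) → M} (H : Sys g e t) (c : M →* M') :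
    Sys (c.comp g) (fun i => c (e i)) (fun x y => c (t x y)) := by
  constructor <;> intros <;> try simp only [MonoidHom.comp_apply, ← map_mul]
  · rw [H.g_e]
  · rw [H.g_t]
  · rw [H.e_idem]
  · rw [H.e_comm]
  · rw [H.e_swap _ _ ‹_›]
  · rw [H.t_self, map_one]
  · rw [H.t_symm]
  · rw [H.t_idem]
  · rw [H.t_comm]
  · rw [H.t_trans]
  · rw [H.t_swap]
  · rw [H.e_t _ _ _ ‹_› ‹_›]
  · rw [H.ete _ _ ‹_›]
  · rw [H.tet _ _ ‹_›]

theorem map_nf {M' : Type*} [Monoid M'] {g : Equiv.Perm (Fin n) →* M} {e : Fin n → M}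
    {t : Option (Fin n) → Option (Fin n) → M} (c : M →* M')
    (K L : Option (Fin n) → Option (Fin n) → Prop) (σ : Equiv.Perm (Fin n)) (D : Fin n → Prop) :
    c (nf g e t K L σ D) =
      nf (c.comp g) (fun i => c (e i)) (fun x y => c (t x y)) K L σ D := by
  simp only [nf, tProd, eProd, map_mul, map_fprod, MonoidHom.comp_apply]

/-- The homomorphism from the presented monoid to binary relations. -/
noncomputable def toBR (hn : 2 ≤ n) : (con n).Quotient →* BR n := (sys_br.gens hn).hom

/-- The symmetric families of the presented monoid are mapped to those of relations, and every
element has a normal form. -/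
theorem exists_sys_cls (hn : 2 ≤ n) :
    ∃ (g : Equiv.Perm (Fin n) →* (con n).Quotient) (E : Fin n → (con n).Quotient)
      (t : Option (Fin n) → Option (Fin n) → (con n).Quotient),
      Sys g E t ∧ (∀ m, Sys.HasNF g E t m) ∧
        ∀ K L σ D, toBR hn (nf g E t K L σ D) = nf pr er tr K L σ D := by
  obtain ⟨g, E, t, H, hg, he, hq, ho⟩ := (gens_cls hn).exists_sys hn
  refine ⟨g, E, t, H, fun m => ?_, fun K L σ D => ?_⟩
  · obtain ⟨w, rfl⟩ := cls_surj m
    induction w using List.reverseRecOn with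
    | nil => exact H.hasNF_one
    | append_singleton w x ih =>
      rw [cls_append]
      cases x with
      | s i =>
        have hi := i.2
        have : cls [SEQO1.s i] = g (adj n i) := by
          rw [hg i (by omega), clsA, dif_pos i.2]
        rw [this]
        exact H.hasNF_mul_g ih _
      | e => rw [← he]; exact H.hasNF_mul_e ih _
      | q => rw [← hq]; exact H.hasNF_mul_t ih _ _
      | o => rw [← ho]; exact H.hasNF_mul_t ih _ _
  · have h1 : ∀ x : SEQO1 n, toBR hn (cls [x]) = letter (fun i => pr (adj n i))
        (er ⟨0, by omega⟩) (tr (some ⟨0, by omega⟩) (some ⟨1, by omega⟩))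
        (tr (some ⟨0, by omega⟩) none) x := fun x => by
      rw [toBR, Gens.hom_cls]; simp
    obtain ⟨h2, h3, h4⟩ := (H.map (toBR hn)).ext_gens hn sys_br (fun i hi => by
      have hi' : i < n - 1 := by omega
      rw [MonoidHom.comp_apply, hg i hi, clsA, dif_pos hi', h1]; rfl)
      (by rw [he, h1]; rfl) (by rw [hq, h1]; rfl) (by rw [ho, h1]; rfl)
    rw [map_nf, h2, h3, h4]

/-- The presented monoid is faithfully represented by relations. -/
theorem toBR_injective (hn : 2 ≤ n) : Function.Injective (toBR hn) := by
  obtain ⟨g, E, t, H, hnf, himg⟩ := exists_sys_cls hn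
  intro m m' h
  obtain ⟨K, L, σ, D, hred, rfl⟩ := hnf m
  obtain ⟨K', L', σ', D', hred', rfl⟩ := hnf m'
  rw [himg, himg] at h
  exact H.nf_inj hred hred' h

end Presented

/-! ### Rook partitions as binary relations -/

section Colourings

variable {n : ℕ}

/-- The colourings of a rook partition, i.e. the sets of points that are unions of blocks. A
colouring of the upper and lower points is viewed as a pair of subsets of `[n]`. -/
def col (α : RP n) : BR n := fun A B =>
  (∀ x y, α.rel x y → (Sum.elim A B x ↔ Sum.elim A B y)) ∧
    ∀ x, ¬ α.rel x x → ¬ Sum.elim A B x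

theorem elim_comp (c : Pt n → Prop) : Sum.elim (fun i => c (.inl i)) (fun i => c (.inr i)) = c := by
  funext x; cases x <;> rfl

/-- Blocks are colourings. -/
theorem col_block (α : RP n) (x : Pt n) :
    col α (fun i => α.rel x (.inl i)) (fun i => α.rel x (.inr i)) := by
  rw [col, elim_comp (fun y => α.rel x y)]
  exact ⟨fun y z h => ⟨fun h' => α.trans h' h, fun h' => α.trans h' (α.symm h)⟩,
    fun y hy h => hy (α.trans (α.symm h) h)⟩

theorem RP.ext' {α β : RP n} (h : ∀ x y, α.rel x y → β.rel x y)
    (h' : ∀ x y, β.rel x y → α.rel x y) : α = β := by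
  have : α.rel = β.rel := funext fun x => funext fun y => propext ⟨h x y, h' x y⟩
  cases α; cases β; cases this; rfl

/-- A rook partition is determined by its colourings. -/
theorem col_injective : Function.Injective (col (n := n)) := by
  have key : ∀ α β : RP n, col α = col β → ∀ x y, α.rel x y → β.rel x y := by
    intro α β h x y hxy
    have hx : α.rel x x := α.trans hxy (α.symm hxy)
    have hy : β.rel y y := by
      by_contra hy
      have h1 := col_block α x
      rw [h, col, elim_comp (fun y => α.rel x y)] at h1
      exact h1.2 y hy hxy
    have h1 := col_block β y
    rw [← h, col, elim_comp (fun z => β.rel y z)] at h1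
    exact β.symm ((h1.1 x y hxy).mpr hy)
  exact fun α β h => RP.ext' (key α β h) (key β α h.symm)

theorem col_one : col (1 : RP n) = 1 := BR.ext fun A B => by
  rw [BR.one_apply]
  constructor
  · intro h
    funext i
    exact propext (h.1 (.inl i) (.inr i) rfl)
  · rintro rfl
    have : ∀ x : Pt n, Sum.elim A A x ↔ A (idx x) := by rintro (i | i) <;> rfl
    refine ⟨fun x y h => ?_, fun x h => absurd rfl h⟩
    rw [this, this, show idx x = idx y from h]

/-- Three subsets of `[n]` as a colouring of the vertices of the product graph. -/
def col3 (A B C : Fin n → Prop) : V3 n → Prop := Sum.elim A (Sum.elim B C)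

theorem col3_embA (A B C : Fin n → Prop) (x : Pt n) : col3 A B C (embA x) ↔ Sum.elim A B x := by
  rcases x with i | i <;> rfl

theorem col3_embB (A B C : Fin n → Prop) (x : Pt n) : col3 A B C (embB x) ↔ Sum.elim B C x := by
  rcases x with i | i <;> rfl

theorem col3_embOut (A B C : Fin n → Prop) (x : Pt n) :
    col3 A B C (embOut x) ↔ Sum.elim A C x := by
  rcases x with i | i <;> rfl

theorem col3_conn {α β : RP n} {A B C : Fin n → Prop} (h : col α A B) (h' : col β B C)
    {x y : V3 n} (hxy : pgConn α β x y) : col3 A B C x ↔ col3 A B C y := by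
  induction hxy with
  | base hE =>
    rcases hE with ⟨a, b, hab, rfl, rfl⟩ | ⟨a, b, hab, rfl, rfl⟩
    · rw [col3_embA, col3_embA]; exact h.1 a b hab
    · rw [col3_embB, col3_embB]; exact h'.1 a b hab
  | refl _ => rfl
  | symm _ ih => exact ih.symm
  | trans _ _ ih ih' => exact ih.trans ih'

theorem col3_white {α β : RP n} {A B C : Fin n → Prop} (h : col α A B) (h' : col β B C)
    {x : V3 n} (hx : pgWhite α β x) : ¬ col3 A B C x := by
  rcases hx with ⟨i, rfl, hi⟩ | ⟨i, rfl, hi | hi⟩ | ⟨i, rfl, hi⟩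
  · exact h.2 (.inl i) hi
  · exact h.2 (.inr i) hi
  · exact h'.2 (.inl i) hi
  · exact h'.2 (.inr i) hi

/-- The colourings of a product are obtained by restricting the colourings of the product
graph to the outer rows. Conversely, a colouring of the product is extended to the product graph by
colouring exactly the components of the coloured outer vertices. -/
theorem col_mul (α β : RP n) : col (α * β) = col α * col β := BR.ext fun A C => by
  have relmul : ∀ x y, (α * β).rel x y ↔ pgConn α β (embOut x) (embOut y) ∧
      ∀ w, pgWhite α β w → ¬ pgConn α β (embOut x) w := fun x y => Iff.rfl
  constructor
  · intro h
    -- a coloured outer vertex is not connected to a white one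
    have nw : ∀ x, Sum.elim A C x → ∀ w, pgWhite α β w → ¬ pgConn α β (embOut x) w := by
      intro x hx w hw hc
      exact h.2 x (fun hr => hr.2 w hw hc) hx
    set P : V3 n → Prop := fun v => ∃ x, pgConn α β (embOut x) v ∧ Sum.elim A C x with hP
    have Pout : ∀ x, P (embOut x) ↔ Sum.elim A C x := by
      intro x
      refine ⟨fun ⟨y, h1, h2⟩ => ?_, fun hx => ⟨x, .refl _, hx⟩⟩
      exact (h.1 y x ((relmul y x).mpr ⟨h1, nw y h2⟩)).mp h2
    have Pedge : ∀ v w, pgEdge α β v w → (P v ↔ P w) := fun v w hE =>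
      ⟨fun ⟨x, h1, h2⟩ => ⟨x, h1.trans (.base hE), h2⟩,
        fun ⟨x, h1, h2⟩ => ⟨x, h1.trans (.symm (.base hE)), h2⟩⟩
    have Pwhite : ∀ v, pgWhite α β v → ¬ P v := fun v hv ⟨x, h1, h2⟩ => nw x h2 v hv h1
    have hA : ∀ x, Sum.elim A (fun i => P (vMid i)) x ↔ P (embA x) := by
      rintro (i | i)
      · exact (Pout (.inl i)).symm
      · rfl
    have hB : ∀ x, Sum.elim (fun i => P (vMid i)) C x ↔ P (embB x) := by
      rintro (i | i)
      · rfl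
      · exact (Pout (.inr i)).symm
    refine ⟨fun i => P (vMid i), ⟨fun x y hxy => ?_, fun x hx => ?_⟩, fun x y hxy => ?_,
      fun x hx => ?_⟩
    · rw [hA, hA]; exact Pedge _ _ (Or.inl ⟨x, y, hxy, rfl, rfl⟩)
    · rw [hA]
      refine Pwhite _ ?_
      rcases x with i | i
      · exact Or.inl ⟨i, rfl, hx⟩
      · exact Or.inr (Or.inl ⟨i, rfl, Or.inl hx⟩)
    · rw [hB, hB]; exact Pedge _ _ (Or.inr ⟨x, y, hxy, rfl, rfl⟩)
    · rw [hB]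
      refine Pwhite _ ?_
      rcases x with i | i
      · exact Or.inr (Or.inl ⟨i, rfl, Or.inr hx⟩)
      · exact Or.inr (Or.inr ⟨i, rfl, hx⟩)
  · rintro ⟨B, h1, h2⟩
    refine ⟨fun x y hxy => ?_, fun x hx hc => hx ?_⟩
    · rw [← col3_embOut A B C, ← col3_embOut A B C]
      exact col3_conn h1 h2 hxy.1
    · refine (relmul x x).mpr ⟨.refl _, fun w hw hcon => ?_⟩
      exact col3_white h1 h2 hw ((col3_conn h1 h2 hcon).mp ((col3_embOut A B C x).mpr hc))

theorem elim_apply (A B : Fin n → Prop) (x : Pt n) (h : A = B) :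
    Sum.elim A B x ↔ A (idx x) := by
  subst h; rcases x with i | i <;> rfl

/-- For an involution `σ` the blocks `{i, (σ i)'}` of the rook partition are also the pairs
`{σ i, i'}`, so the two conventions for the action agree. -/
theorem col_permRP (σ : Equiv.Perm (Fin n)) (hσ : ∀ i, σ (σ i) = i) :
    col (permRP σ) = pr σ := BR.ext fun A B => by
  constructor
  · intro h
    funext i
    exact propext (h.1 (.inl (σ i)) (.inr i) (hσ i)).symm
  · rintro (rfl : B = fun i => A (σ i))
    have hx : ∀ x, Sum.elim A (fun i => A (σ i)) x ↔
        A (σ (Sum.elim (fun i => σ i) (fun i => i) x)) := by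
      rintro (i | i)
      · rw [Sum.elim_inl, Sum.elim_inl, hσ]
      · rfl
    refine ⟨fun x y h => ?_, fun x h => absurd rfl h⟩
    rw [hx, hx, show Sum.elim (fun i => σ i) (fun i => i) x = _ from h]

theorem col_perm (i : Fin (n - 1)) : col (sbar i) = pr (adj n i) := by
  have hadj : adj n i = Equiv.swap (lo i) (hi i) := by
    have := i.2
    rw [adj, dif_pos (show i.val + 1 < n by omega)]
    rfl
  rw [hadj, sbar]
  exact col_permRP _ fun j => Equiv.swap_apply_self _ _ j

theorem col_ebar (i : Fin n) : col (ebar i) = er i := BR.ext fun A B => by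
  constructor
  · intro h j hj
    exact h.1 (.inl j) (.inr j) (Or.inr ⟨rfl, hj⟩)
  · intro h
    refine ⟨fun x y hxy => ?_, fun x hx => absurd (Or.inl rfl) hx⟩
    rcases hxy with rfl | ⟨h1, h2⟩
    · rfl
    rcases x with j | j <;> rcases y with k | k <;> obtain rfl : j = k := h1
    · rfl
    · exact h j h2
    · exact (h j h2).symm
    · rfl

theorem col_tbar (i j : Fin n) : col (tbar i j) = tr (some i) (some j) := BR.ext fun A B => by
  rw [tr, ext0_some, ext0_some]
  constructor
  · intro h
    exact ⟨funext fun k => propext (h.1 (.inl k) (.inr k) (Or.inl rfl)),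
      h.1 (.inl i) (.inl j) (Or.inr ⟨Or.inl rfl, Or.inr rfl⟩)⟩
  · rintro ⟨rfl, h⟩
    refine ⟨fun x y hxy => ?_, fun x hx => absurd (Or.inl rfl) hx⟩
    rw [elim_apply A A x rfl, elim_apply A A y rfl]
    rcases hxy with h1 | ⟨h1 | h1, h2 | h2⟩
    · rw [h1]
    · rw [h1, h2]
    · rw [h1, h2]; exact h
    · rw [h1, h2]; exact h.symm
    · rw [h1, h2]

theorem col_obar (i : Fin n) : col (obar i) = tr (some i) none := BR.ext fun A B => by
  rw [tr, ext0_some, ext0_none, iff_false]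
  constructor
  · intro h
    have hi : ∀ x : Pt n, idx x = i → ¬ Sum.elim A B x := fun x hx =>
      h.2 x (fun hh => hh.2 hx)
    refine ⟨funext fun k => propext ?_, hi (.inl i) rfl⟩
    by_cases hk : k = i
    · exact iff_of_false (hi (.inl k) hk) (hi (.inr k) hk)
    · exact h.1 (.inl k) (.inr k) ⟨rfl, hk⟩
  · rintro ⟨rfl, h⟩
    refine ⟨fun x y hxy => ?_, fun x hx => ?_⟩
    · rw [elim_apply A A x rfl, elim_apply A A y rfl, hxy.1]
    · rw [elim_apply A A x rfl]
      intro hA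
      exact hx ⟨rfl, fun hh => h (by rwa [show idx x = i from hh] at hA)⟩

/-- The relation attached to the value of a word. -/
theorem col_xiW (hn : 2 ≤ n) (w : List (SEQO1 n)) : col (xiW hn w) = toBR hn (cls w) := by
  have hl : ∀ x, col (xiLetter hn x) = letter (fun i => pr (adj n i)) (er ⟨0, by omega⟩)
      (tr (some ⟨0, by omega⟩) (some ⟨1, by omega⟩)) (tr (some ⟨0, by omega⟩) none) x := by
    rintro (i | _ | _ | _)
    · exact col_perm i
    · exact col_ebar _
    · exact col_tbar _ _
    · exact col_obar _
  rw [toBR, Gens.hom_cls, xiW]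
  induction w with
  | nil => exact col_one
  | cons x w ih =>
    rw [List.map_cons, List.prod_cons, ← ih, ← hl]
    cases w with
    | nil => rw [evalWord, evalWord, col_one, mul_one]
    | cons y w => rw [evalWord, col_mul]

/-- The kernel of a rook partition on the upper (resp. lower) row, with the extra point attached
to all rook dots, given by the agreement of all colourings. -/
def kern (α : RP n) (f : Fin n → Pt n) (x y : Option (Fin n)) : Prop :=
  ∀ A B, col α A B → (ext0 (fun i => Sum.elim A B (f i)) x ↔ ext0 (fun i => Sum.elim A B (f i)) y)

theorem kern_of_rel {α : RP n} {f : Fin n → Pt n} {i j : Fin n} (h : α.rel (f i) (f j)) :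
    kern α f (some i) (some j) := fun A B hc => by
  rw [ext0_some, ext0_some]; exact hc.1 _ _ h

theorem kern_of_dot {α : RP n} {f : Fin n → Pt n} {i : Fin n} (h : ¬ α.rel (f i) (f i)) :
    kern α f (some i) none := fun A B hc => by
  rw [ext0_some, ext0_none, iff_false]; exact hc.2 _ h

/-- Every rook partition has the relation of a normal form: its kernels are those of the two rows,
and each transversal block joins its least lower point to one of its upper points. -/
theorem exists_nf_br (α : RP n) : ∃ K L σ D, nf pr er tr K L σ D = col α := by
  classical
  set D : Fin n → Prop := fun i => (∃ j, α.rel (.inl j) (.inr i)) ∧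
    ∀ k, α.rel (.inr i) (.inr k) → i ≤ k with hD
  have rep : ∀ i j, α.rel (.inl j) (.inr i) → ∃ i', D i' ∧ α.rel (.inr i) (.inr i') := by
    intro i j hij
    have hii : α.rel (.inr i) (.inr i) := α.trans (α.symm hij) hij
    obtain ⟨m, hm, hmin⟩ := Finset.exists_min_image
      (Finset.univ.filter fun k => α.rel (.inr i) (.inr k)) id ⟨i, by simpa using hii⟩
    have hm' : α.rel (.inr i) (.inr m) := by simpa using hm
    exact ⟨m, ⟨⟨j, α.trans hij hm'⟩, fun k hk => hmin k (by simpa using α.trans hm' hk)⟩, hm'⟩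
  set f : Fin n → Fin n := fun i => if h : D i then h.1.choose else i with hf
  have fD : ∀ i, D i → α.rel (.inl (f i)) (.inr i) := fun i h => by
    rw [hf]; simp only [dif_pos h]; exact h.1.choose_spec
  have finj : Set.InjOn f (Finset.univ.filter D : Finset (Fin n)) := by
    intro i hi j hj hij
    have hi' : D i := by simpa using hi
    have hj' : D j := by simpa using hj
    have h1 := fD i hi'
    have h2 := fD j hj'
    rw [hij] at h1
    have h3 := α.trans (α.symm h1) h2
    exact le_antisymm (hi'.2 j h3) (hj'.2 i (α.symm h3))
  obtain ⟨σ0, hσ0⟩ := Finset.exists_equiv_extend_of_card_eq (t := Finset.univ) (by simp)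
    (Finset.subset_univ _) finj
  set σ : Equiv.Perm (Fin n) := σ0.trans (Equiv.subtypeUnivEquiv (by simp)) with hσ
  have σD : ∀ i, D i → α.rel (.inl (σ i)) (.inr i) := fun i h => by
    have : σ i = f i := hσ0 i (by simpa using h)
    rw [this]; exact fD i h
  refine ⟨kern α .inl, kern α .inr, σ, D, BR.ext fun A B => ?_⟩
  rw [nf_br_apply]
  constructor
  · rintro ⟨hA, hB, hAB⟩
    have cross : ∀ i j, α.rel (.inl i) (.inr j) → (A i ↔ B j) := by
      intro i j hij
      obtain ⟨j', hj', hjj⟩ := rep j i hij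
      have h1 := hA _ _ (kern_of_rel (f := .inl)
        (α.trans hij (α.trans hjj (α.symm (σD j' hj')))))
      have h2 := hB _ _ (kern_of_rel (f := .inr) hjj)
      simp only [ext0_some] at h1 h2
      exact h1.trans ((hAB j' hj').trans h2.symm)
    refine ⟨fun x y hxy => ?_, fun x hx => ?_⟩
    · rcases x with i | i <;> rcases y with j | j
      · simpa using hA _ _ (kern_of_rel (f := .inl) hxy)
      · exact cross i j hxy
      · exact (cross j i (α.symm hxy)).symm
      · simpa using hB _ _ (kern_of_rel (f := .inr) hxy)
    · rcases x with i | i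
      · simpa using hA _ _ (kern_of_dot (f := .inl) hx)
      · simpa using hB _ _ (kern_of_dot (f := .inr) hx)
  · intro h
    exact ⟨fun x y hxy => hxy A B h, fun x y hxy => hxy A B h,
      fun i hi => h.1 _ _ (σD i hi)⟩

end Colourings

/-! ### The presentation -/

/-- presentation of `RP_n` on `n + 2` generators: the monoid
homomorphism `ξ : (S ∪ {e,q,o})* → RP_n` is surjective and its kernel congruence is
exactly the congruence generated by (R44)–(R59). -/
theorem stmt17 (n : ℕ) (hn : 2 ≤ n) :
    (∀ α : RP n, ∃ w : List (SEQO1 n), xiW hn w = α) ∧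
    (∀ u v : List (SEQO1 n), xiW hn u = xiW hn v ↔ CongGen (RelSEQO1 n) u v) := by
  refine ⟨fun α => ?_, fun u v => ?_⟩
  · obtain ⟨g, E, t, -, -, himg⟩ := exists_sys_cls hn
    obtain ⟨K, L, σ, D, h⟩ := exists_nf_br α
    obtain ⟨w, hw⟩ := cls_surj (nf g E t K L σ D)
    exact ⟨w, col_injective (by rw [col_xiW, hw, himg, h])⟩
  · rw [← cls_eq, ← (toBR_injective hn).eq_iff, ← col_xiW, ← col_xiW, col_injective.eq_iff]

end RookPaper
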